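/- arXiv:1806.08855 — 4 statements merged into one kernel-verified Lean document; each statement's English description precedes it below -/
import Mathlib

section
/- Let k ≥ 2 and let F be an initial (shifted) family of k-element subsets of [n] with ν(F) ≤ s, where n ≥ s+1. Then ν(∂(F(∅))) ≤ s, where F(∅) := {F ∈ F : F ∩ [s+1] = ∅} and ∂ denotes the immediate shadow. -/
open Finset

/-- The shifting partial order: `A ≺ B` iff `A ≠ B`, the two sets have the same
size, and the `i`-th smallest element of `A` is at most the `i`-th smallest
element of `B` for every `i`. -/
def ShiftPrec (A B : Finset ℕ) : Prop :=
  A ≠ B ∧ List.Forall₂ (· ≤ ·) (A.sort (· ≤ ·)) (B.sort (· ≤ ·))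

/-- A family of subsets of `[m] = {1,…,m}` is initial (shifted) if it is closed
downwards with respect to the shifting partial order. -/
def IsInitial (m : ℕ) (F : Finset (Finset ℕ)) : Prop :=
  ∀ A B : Finset ℕ, A ⊆ Finset.Icc 1 m → ShiftPrec A B → B ∈ F → A ∈ F

/-- The matching number of a family of finite sets: the maximum size of a
subfamily consisting of pairwise disjoint sets. -/
noncomputable def matchingNumber (F : Finset (Finset ℕ)) : ℕ :=
  sSup {t : ℕ | ∃ M : Finset (Finset ℕ), M ⊆ F ∧
    (M : Set (Finset ℕ)).Pairwise (fun A B => Disjoint A B) ∧ M.card = t}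

/-!
If `H` lies in the shadow of the members of `F` avoiding `[t]`, then `H ∪ {x} ∈ F` for some `x > t`,
so shifting `x` down gives `H ∪ {a} ∈ F` for every `a ∈ [t]`. Hence a matching of size at
most `t` in the shadow extends, by adding distinct elements of `[t]` to its members, to a matching
of the same size in `F`; the bound is the case `t = s + 1`.
-/

section Sorting

variable {α : Type*} [LinearOrder α]

lemma forall₂_le_orderedInsert {a b : α} (hab : a ≤ b) {l : List α} (hl : l.Pairwise (· ≤ ·)) :
    List.Forall₂ (· ≤ ·) (l.orderedInsert (· ≤ ·) a) (l.orderedInsert (· ≤ ·) b) := by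
  induction l generalizing a with
  | nil => simpa using hab
  | cons c l ih =>
    obtain ⟨hcl, hl⟩ := List.pairwise_cons.1 hl
    by_cases hbc : b ≤ c
    · rw [List.orderedInsert_cons_of_le _ _ hbc, List.orderedInsert_cons_of_le _ _ (hab.trans hbc)]
      exact .cons hab (List.forall₂_refl _)
    rw [List.orderedInsert_of_not_le _ _ hbc]
    by_cases hac : a ≤ c
    · have insert_head : l.orderedInsert (· ≤ ·) c = c :: l := by
        cases l with
        | nil => rfl
        | cons d l => exact List.orderedInsert_cons_of_le _ _ (hcl d List.mem_cons_self)
      rw [List.orderedInsert_cons_of_le _ _ hac, ← insert_head]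
      exact .cons hac (ih (not_le.1 hbc).le hl)
    · rw [List.orderedInsert_of_not_le _ _ hac]
      exact .cons le_rfl (ih hab hl)

lemma sort_insert_eq_orderedInsert {a : α} {s : Finset α} (ha : a ∉ s) :
    (insert a s).sort (· ≤ ·) = (s.sort (· ≤ ·)).orderedInsert (· ≤ ·) a := by
  refine List.Perm.eq_of_pairwise' (r := (· ≤ ·)) (pairwise_sort _ _)
    ((pairwise_sort _ _).orderedInsert _ _) (.trans ?_ (List.perm_orderedInsert _ _ _).symm)
  rw [← Multiset.coe_eq_coe, ← Multiset.cons_coe, sort_eq, sort_eq, insert_val_of_notMem ha]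

end Sorting

lemma exists_injOn_mapsTo_of_card_le {α β : Type*} [Nonempty β] {s : Finset α} {t : Finset β}
    (h : s.card ≤ t.card) : ∃ f : α → β, Set.MapsTo f s t ∧ Set.InjOn f s := by
  have hencard : (s : Set α).encard ≤ (t : Set β).encard := by
    simpa only [Set.encard_coe_eq_coe_finsetCard, Nat.cast_le] using h
  exact s.finite_toSet.exists_injOn_of_encard_le hencard

lemma pairwiseDisjoint_insert_apply {α : Type*} [DecidableEq α] {N : Set (Finset α)}
    {f : Finset α → α} (hN : N.PairwiseDisjoint id) (hf : Set.InjOn f N)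
    (hfN : ∀ H ∈ N, ∀ K ∈ N, f H ∉ K) : N.PairwiseDisjoint fun H => insert (f H) H := by
  intro H hH K hK hne
  have hdisj : Disjoint H K := hN hH hK hne
  have hfne : f H ≠ f K := hf.ne hH hK hne
  simp only [Function.onFun, disjoint_insert_left, disjoint_insert_right, mem_insert, not_or]
  exact ⟨⟨hfne.symm, hfN K hK H hH⟩, hfN H hH K hK, hdisj⟩

lemma disjoint_of_mem_shadow_filter {α : Type*} [DecidableEq α] {F : Finset (Finset α)}
    {H T : Finset α} (hH : H ∈ shadow (F.filter fun A => A ∩ T = ∅)) : Disjoint H T := by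
  obtain ⟨x, -, hxF⟩ := mem_shadow_iff_insert_mem.1 hH
  exact (disjoint_iff_inter_eq_empty.2 (mem_filter.1 hxF).2).mono_left (subset_insert x H)

lemma shiftPrec_insert_insert {a b : ℕ} {H : Finset ℕ} (ha : a ∉ H) (hb : b ∉ H) (hab : a < b) :
    ShiftPrec (insert a H) (insert b H) := by
  refine ⟨fun h => hab.ne ((insert_inj ha).1 h), ?_⟩
  rw [sort_insert_eq_orderedInsert ha, sort_insert_eq_orderedInsert hb]
  exact forall₂_le_orderedInsert hab.le (pairwise_sort _ _)

lemma IsInitial.insert_mem {n a b : ℕ} {F : Finset (Finset ℕ)} {H : Finset ℕ}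
    (hinit : IsInitial n F) (hbF : insert b H ∈ F) (hbn : insert b H ⊆ Icc 1 n) (hb : b ∉ H)
    (ha : a ∉ H) (ha_pos : 1 ≤ a) (hab : a < b) : insert a H ∈ F := by
  obtain ⟨hb_mem, hH⟩ := insert_subset_iff.1 hbn
  have ha_mem : a ∈ Icc 1 n := mem_Icc.2 ⟨ha_pos, hab.le.trans (mem_Icc.1 hb_mem).2⟩
  exact hinit _ _ (insert_subset ha_mem hH) (shiftPrec_insert_insert ha hb hab) hbF

lemma IsInitial.insert_mem_of_mem_shadow {n t a : ℕ} {F : Finset (Finset ℕ)} {H : Finset ℕ}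
    (hinit : IsInitial n F) (hF : F ⊆ (Icc 1 n).powerset)
    (hH : H ∈ shadow (F.filter fun A => A ∩ Icc 1 t = ∅)) (ha : a ∈ Icc 1 t) :
    insert a H ∈ F := by
  obtain ⟨x, hx, hxF⟩ := mem_shadow_iff_insert_mem.1 hH
  obtain ⟨hxF, hxt⟩ := mem_filter.1 hxF
  have hxn : insert x H ⊆ Icc 1 n := mem_powerset.1 (hF hxF)
  have haH : a ∉ H := disjoint_right.1 (disjoint_of_mem_shadow_filter hH) ha
  have hx_notMem : x ∉ Icc 1 t :=
    disjoint_left.1 (disjoint_iff_inter_eq_empty.2 hxt) (mem_insert_self x H)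
  have hax : a < x := by
    have := hxn (mem_insert_self x H)
    simp only [mem_Icc] at this ha hx_notMem
    omega
  exact hinit.insert_mem hxF hxn hx haH (mem_Icc.1 ha).1 hax

lemma le_matchingNumber_iff {F : Finset (Finset ℕ)} {m : ℕ} :
    m ≤ matchingNumber F ↔
      ∃ M ⊆ F, (M : Set (Finset ℕ)).PairwiseDisjoint id ∧ M.card = m := by
  set sizes : Set ℕ := {t | ∃ M : Finset (Finset ℕ), M ⊆ F ∧
    (M : Set (Finset ℕ)).Pairwise (fun A B => Disjoint A B) ∧ M.card = t}
  have sizes_bddAbove : BddAbove sizes :=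
    ⟨F.card, by rintro _ ⟨M, hM, -, rfl⟩; exact card_le_card hM⟩
  have sizes_nonempty : sizes.Nonempty := ⟨0, ∅, by simp⟩
  constructor
  · intro hm
    obtain ⟨M, hMF, hM, hcard⟩ := Nat.sSup_mem sizes_nonempty sizes_bddAbove
    obtain ⟨N, hNM, hN⟩ := exists_subset_card_eq (hm.trans_eq hcard.symm)
    exact ⟨N, hNM.trans hMF, hM.mono (coe_subset.2 hNM), hN⟩
  · exact fun hm => le_csSup sizes_bddAbove hm

lemma card_le_matchingNumber {ι : Type*} {s : Finset ι} {g : ι → Finset ℕ}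
    {F : Finset (Finset ℕ)} (hg : (s : Set ι).PairwiseDisjoint g)
    (hne : ∀ i ∈ s, (g i).Nonempty) (hgF : ∀ i ∈ s, g i ∈ F) : s.card ≤ matchingNumber F := by
  have hinj : Set.InjOn g s := fun i hi j hj hij =>
    hg.elim hi hj fun hdisj => (hne i hi).ne_empty (disjoint_self.1 (hij ▸ hdisj))
  refine le_matchingNumber_iff.2 ⟨s.image g, image_subset_iff.2 hgF, ?_, card_image_of_injOn hinj⟩
  rw [coe_image]
  exact Set.Pairwise.image hg

theorem shadow_of_empty_part_matching_bound_general {n : ℕ} (t : ℕ) {F : Finset (Finset ℕ)}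
    (hF : F ⊆ (Finset.Icc 1 n).powerset) (hinit : IsInitial n F) :
    min t (matchingNumber (Finset.shadow (F.filter fun A => A ∩ Finset.Icc 1 t = ∅))) ≤
      matchingNumber F := by
  obtain ⟨N, hNsub, hN, hcard⟩ := le_matchingNumber_iff.1 (min_le_right t
    (matchingNumber (shadow (F.filter fun A => A ∩ Icc 1 t = ∅))))
  have hle : N.card ≤ (Icc 1 t).card := by simp [hcard]
  obtain ⟨f, hft, hfinj⟩ := exists_injOn_mapsTo_of_card_le hle
  have hfN : ∀ H ∈ N, ∀ K ∈ N, f H ∉ K := fun H hH K hK =>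
    disjoint_right.1 (disjoint_of_mem_shadow_filter (hNsub hK)) (hft hH)
  rw [← hcard]
  exact card_le_matchingNumber (pairwiseDisjoint_insert_apply hN hfinj hfN)
    (fun H _ => insert_nonempty (f H) H)
    (fun H hH => hinit.insert_mem_of_mem_shadow hF (hNsub hH) (hft hH))

theorem shadow_of_empty_part_matching_bound (n k s : ℕ) (hk : 2 ≤ k) (hn : s + 1 ≤ n)
    (F : Finset (Finset ℕ)) (hF : F ⊆ (Finset.Icc 1 n).powersetCard k)
    (hinit : IsInitial n F) (hnu : matchingNumber F ≤ s) :
    matchingNumber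
      (Finset.shadow (F.filter fun A => A ∩ Finset.Icc 1 (s + 1) = ∅)) ≤ s := by
  have hF' : F ⊆ (Icc 1 n).powerset := fun A hA =>
    mem_powerset.2 (mem_powersetCard.1 (hF hA)).1
  have := shadow_of_empty_part_matching_bound_general (s + 1) hF' hinit
  omega
end

section
/- Fix an integer k ≥ 2. The function x ↦ c*_x, where c*_x := limsup_{n→∞} m*(n,k,⌊xn⌋)/C(n,k), is nondecreasing and continuous on the interval [0, 1/k), where C(a,b) denotes the binomial coefficient. -/
open Finset

/-- The fractional matching number of a family `F` of subsets of `{0,…,n-1}`: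
the supremum of sizes of fractional matchings, i.e. weight functions
`w : F → [0,1]` such that every vertex carries total weight at most 1. -/
noncomputable def fracMatchingNumber (n : ℕ) (F : Finset (Finset ℕ)) : ℝ :=
  sSup {v : ℝ | ∃ w : Finset ℕ → ℝ,
    (∀ A, 0 ≤ w A ∧ w A ≤ 1) ∧ (∀ A, A ∉ F → w A = 0) ∧
    (∀ i ∈ Finset.range n, ∑ A ∈ F.filter (fun A => i ∈ A), w A ≤ 1) ∧
    v = ∑ A ∈ F, w A}

/-- `mStarEMC n k s` is `m*(n,k,s)`: the maximum size of a family of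
`k`-subsets of an `n`-set whose fractional matching number is less than `s+1`. -/
noncomputable def mStarEMC (n k s : ℕ) : ℕ :=
  sSup {t : ℕ | ∃ F : Finset (Finset ℕ), F ⊆ (Finset.range n).powersetCard k ∧
    fracMatchingNumber n F < (s : ℝ) + 1 ∧ t = F.card}

/-- `cStar k x = limsup_{n → ∞} m*(n,k,⌊xn⌋) / C(n,k)`. -/
noncomputable def cStar (k : ℕ) (x : ℝ) : ℝ :=
  Filter.limsup (fun n : ℕ => (mStarEMC n k ⌊x * n⌋₊ : ℝ) / (n.choose k : ℝ)) Filter.atTop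

/-!
The uniform weight `1 / C(n-1,k-1)` on a `k`-uniform family is a fractional matching, whence
`m*(n,k,s) ≤ (s+1) C(n-1,k-1)` and `0 ≤ c*_x ≤ kx`; this gives continuity at `0`. Away from `0`,
regard a family on `n` vertices that is admissible for `y` as a family on `⌈yn/x⌉` vertices, where
it is admissible for the smaller `x`: its density drops by a factor tending to `(x/y)^k`, so
`c*_x / x^k` is nonincreasing. A nondecreasing function whose quotient by a positive continuous
function is nonincreasing is continuous.
-/

open Filter Topology

lemma card_filter_mem_powersetCard {α : Type*} [DecidableEq α] {a : α} {S : Finset α}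
    (ha : a ∈ S) {k : ℕ} (hk : 1 ≤ k) :
    #{A ∈ S.powersetCard k | a ∈ A} = (#S - 1).choose (k - 1) := by
  simpa using card_filter_powersetCard_subset {a} S k (by simpa) (by simpa)

lemma tendsto_choose_div_choose {ι : Type*} {l : Filter ι} {u v : ι → ℕ}
    (hu : Tendsto u l atTop) (hv : Tendsto v l atTop) {r : ℝ}
    (h : Tendsto (fun i => (u i : ℝ) / v i) l (𝓝 r)) (k : ℕ) :
    Tendsto (fun i => ((u i).choose k : ℝ) / (v i).choose k) l (𝓝 (r ^ k)) := by
  have hequiv := ((isEquivalent_choose k).comp_tendsto hu).div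
    ((isEquivalent_choose k).comp_tendsto hv)
  refine hequiv.tendsto_nhds_iff.mpr ((h.pow k).congr fun i => ?_)
  have hfact : (k.factorial : ℝ) ≠ 0 := by positivity
  simp only [Function.comp, Pi.div_apply]
  rw [div_div_div_cancel_right₀ hfact, div_pow]

lemma tendsto_natCast_div_nat_ceil_mul_atTop {q : ℝ} (hq : 0 < q) :
    Tendsto (fun n : ℕ => (n : ℝ) / ⌈q * n⌉₊) atTop (𝓝 q⁻¹) := by
  simpa only [Function.comp_def, inv_div] using
    ((tendsto_nat_ceil_mul_div_atTop hq.le).comp tendsto_natCast_atTop_atTop).inv₀ hq.ne'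

-- Both hypotheses bound `f y` between `f x` and `f x / g x * g y`.
lemma continuousOn_of_monotoneOn_of_antitoneOn_div {α 𝕜 : Type*} [LinearOrder α]
    [TopologicalSpace α] [Field 𝕜] [LinearOrder 𝕜] [IsStrictOrderedRing 𝕜] [TopologicalSpace 𝕜]
    [OrderTopology 𝕜] {s : Set α} {f g : α → 𝕜} (hf : MonotoneOn f s)
    (hfg : AntitoneOn (fun x => f x / g x) s) (hg : ContinuousOn g s)
    (hpos : ∀ x ∈ s, 0 < g x) : ContinuousOn f s := by
  intro x hx
  let r : α → 𝕜 := fun y => f x / g x * g y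
  have hr : Tendsto r (𝓝[s] x) (𝓝 (f x)) := by
    simpa only [div_mul_cancel₀ _ (hpos x hx).ne'] using (hg x hx).tendsto.const_mul (f x / g x)
  have hlower : Tendsto (fun y => min (f x) (r y)) (𝓝[s] x) (𝓝 (f x)) := by
    simpa using (tendsto_const_nhds (x := f x)).min hr
  have hupper : Tendsto (fun y => max (f x) (r y)) (𝓝[s] x) (𝓝 (f x)) := by
    simpa using (tendsto_const_nhds (x := f x)).max hr
  refine tendsto_of_tendsto_of_tendsto_of_le_of_le' hlower hupper ?_ ?_ <;>
    filter_upwards [self_mem_nhdsWithin] with y hy <;>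
    obtain hxy | hyx := le_total x y
  · exact min_le_of_left_le (hf hx hy hxy)
  · exact min_le_of_right_le ((le_div_iff₀ (hpos y hy)).mp (hfg hy hx hyx))
  · exact le_max_of_le_right ((div_le_iff₀ (hpos y hy)).mp (hfg hx hy hxy))
  · exact le_max_of_le_left (hf hy hx hyx)

/-- `w` is a fractional matching in `F`, viewed as a family on the vertex set `{0,…,n-1}`; as in
`fracMatchingNumber`, the weights are extended by zero outside `F`. -/
structure IsFracMatching (n : ℕ) (F : Finset (Finset ℕ)) (w : Finset ℕ → ℝ) : Prop where
  nonneg_and_le_one : ∀ A, 0 ≤ w A ∧ w A ≤ 1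
  eq_zero_of_notMem : ∀ A, A ∉ F → w A = 0
  sum_filter_mem_le_one : ∀ i ∈ range n, ∑ A ∈ F with i ∈ A, w A ≤ 1

section

variable {k m n s t : ℕ} {x y : ℝ} {F : Finset (Finset ℕ)} {w : Finset ℕ → ℝ}

lemma IsFracMatching.sum_le_card (hw : IsFracMatching n F w) : ∑ A ∈ F, w A ≤ #F := by
  simpa using sum_le_card_nsmul F w 1 fun A _ => (hw.nonneg_and_le_one A).2

lemma IsFracMatching.anti (hmn : m ≤ n) (hw : IsFracMatching n F w) :
    IsFracMatching m F w where
  nonneg_and_le_one := hw.nonneg_and_le_one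
  eq_zero_of_notMem := hw.eq_zero_of_notMem
  sum_filter_mem_le_one i hi := hw.sum_filter_mem_le_one i (range_mono hmn hi)

lemma isFracMatching_zero (n : ℕ) (F : Finset (Finset ℕ)) : IsFracMatching n F fun _ => 0 := by
  constructor <;> simp

lemma IsFracMatching.sum_le_fracMatchingNumber (hw : IsFracMatching n F w) :
    ∑ A ∈ F, w A ≤ fracMatchingNumber n F := by
  refine le_csSup ⟨#F, ?_⟩
    ⟨w, hw.nonneg_and_le_one, hw.eq_zero_of_notMem, hw.sum_filter_mem_le_one, rfl⟩
  rintro _ ⟨v, h01, hF, hsum, rfl⟩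
  exact IsFracMatching.sum_le_card ⟨h01, hF, hsum⟩

lemma fracMatchingNumber_le {b : ℝ} (h : ∀ w, IsFracMatching n F w → ∑ A ∈ F, w A ≤ b) :
    fracMatchingNumber n F ≤ b := by
  obtain ⟨h01, hF, hsum⟩ := isFracMatching_zero n F
  refine csSup_le ⟨_, _, h01, hF, hsum, rfl⟩ ?_
  rintro _ ⟨w, h01, hF, hsum, rfl⟩
  exact h w ⟨h01, hF, hsum⟩

lemma fracMatchingNumber_antitone (F : Finset (Finset ℕ)) :
    Antitone fun n => fracMatchingNumber n F := fun _ _ hmn =>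
  fracMatchingNumber_le fun _ hw => (hw.anti hmn).sum_le_fracMatchingNumber

lemma card_div_le_fracMatchingNumber {d : ℕ} (hd : ∀ i ∈ range n, #{A ∈ F | i ∈ A} ≤ d) :
    (#F : ℝ) / d ≤ fracMatchingNumber n F := by
  have huniform : IsFracMatching n F fun A => if A ∈ F then (d : ℝ)⁻¹ else 0 := by
    refine ⟨fun A => ?_, fun A hA => if_neg hA, fun i hi => ?_⟩
    · split_ifs
      · exact ⟨by positivity, Nat.cast_inv_le_one d⟩
      · exact ⟨le_rfl, zero_le_one⟩
    · calc ∑ A ∈ F with i ∈ A, (if A ∈ F then (d : ℝ)⁻¹ else 0)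
          = ∑ A ∈ F with i ∈ A, (d : ℝ)⁻¹ :=
            sum_congr rfl fun A hA => if_pos (mem_filter.mp hA).1
        _ = #{A ∈ F | i ∈ A} * (d : ℝ)⁻¹ := by rw [sum_const, nsmul_eq_mul]
        _ ≤ 1 := mul_inv_le_one_of_le₀ (mod_cast hd i hi) d.cast_nonneg
  calc (#F : ℝ) / d = ∑ A ∈ F, if A ∈ F then (d : ℝ)⁻¹ else 0 := by
        simp [div_eq_mul_inv]
    _ ≤ fracMatchingNumber n F := huniform.sum_le_fracMatchingNumber

lemma mStarEMC_le {b : ℕ} (h : ∀ F ⊆ (range n).powersetCard k,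
    fracMatchingNumber n F < (s : ℝ) + 1 → #F ≤ b) : mStarEMC n k s ≤ b := by
  refine csSup_le' ?_
  rintro _ ⟨F, hF, hν, rfl⟩
  exact h F hF hν

lemma card_le_choose_of_subset_powersetCard_range (hF : F ⊆ (range n).powersetCard k) :
    #F ≤ n.choose k := by
  simpa using card_le_card hF

lemma mStarEMC_le_choose (n k s : ℕ) : mStarEMC n k s ≤ n.choose k :=
  mStarEMC_le fun _ hF _ => card_le_choose_of_subset_powersetCard_range hF

lemma card_le_mStarEMC (hF : F ⊆ (range n).powersetCard k)
    (hν : fracMatchingNumber n F < (s : ℝ) + 1) : #F ≤ mStarEMC n k s := by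
  refine le_csSup ⟨n.choose k, ?_⟩ ⟨F, hF, hν, rfl⟩
  rintro _ ⟨G, hG, -, rfl⟩
  exact card_le_choose_of_subset_powersetCard_range hG

lemma mStarEMC_mono (k : ℕ) (hmn : m ≤ n) (hst : s ≤ t) : mStarEMC m k s ≤ mStarEMC n k t :=
  mStarEMC_le fun F hF hν => card_le_mStarEMC
    (hF.trans (powersetCard_mono (range_mono hmn)))
    (calc fracMatchingNumber n F ≤ fracMatchingNumber m F := fracMatchingNumber_antitone F hmn
      _ < s + 1 := hν
      _ ≤ t + 1 := by gcongr)

lemma mStarEMC_succ_succ_le (n k s : ℕ) :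
    mStarEMC (n + 1) (k + 1) s ≤ (s + 1) * n.choose k := by
  obtain hnk | hkn := lt_or_ge n k
  · exact (mStarEMC_le_choose _ _ _).trans (by simp [Nat.choose_eq_zero_of_lt, hnk])
  refine mStarEMC_le fun F hF hν => ?_
  have hdeg : ∀ i ∈ range (n + 1), #{A ∈ F | i ∈ A} ≤ n.choose k := fun i hi => by
    simpa [card_filter_mem_powersetCard hi k.succ_pos] using
      card_le_card (filter_subset_filter (i ∈ ·) hF)
  have hchoose : (0 : ℝ) < n.choose k := mod_cast Nat.choose_pos hkn
  have hcard := (card_div_le_fracMatchingNumber hdeg).trans_lt hν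
  rw [div_lt_iff₀ hchoose] at hcard
  exact_mod_cast hcard.le

/-- The density `m*(n,k,⌊xn⌋) / C(n,k)`, whose upper limit as `n → ∞` is `cStar k x`. As a quotient
by zero, it is `0` for `n < k`. -/
noncomputable def mStarDensity (k : ℕ) (x : ℝ) (n : ℕ) : ℝ :=
  mStarEMC n k ⌊x * n⌋₊ / n.choose k

lemma mStarDensity_nonneg (k : ℕ) (x : ℝ) (n : ℕ) : 0 ≤ mStarDensity k x n := by
  unfold mStarDensity
  positivity

lemma mStarDensity_le_one (k : ℕ) (x : ℝ) (n : ℕ) : mStarDensity k x n ≤ 1 :=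
  div_le_one_of_le₀ (mod_cast mStarEMC_le_choose _ _ _) (by positivity)

lemma mStarDensity_mono (hxy : x ≤ y) (n : ℕ) : mStarDensity k x n ≤ mStarDensity k y n := by
  have hmono : mStarEMC n k ⌊x * n⌋₊ ≤ mStarEMC n k ⌊y * n⌋₊ :=
    mStarEMC_mono k le_rfl (Nat.floor_mono (by gcongr))
  unfold mStarDensity
  gcongr

lemma mStarDensity_le (hk : 1 ≤ k) (hx : 0 ≤ x) (hn : 1 ≤ n) :
    mStarDensity k x n ≤ k * x + k / n := by
  obtain ⟨k, rfl⟩ := Nat.exists_eq_add_of_le' hk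
  obtain ⟨n, rfl⟩ := Nat.exists_eq_add_of_le' hn
  have hchoose : ((n + 1 : ℕ) : ℝ) * n.choose k = (n + 1).choose (k + 1) * (k + 1 : ℕ) :=
    mod_cast Nat.add_one_mul_choose_eq n k
  refine div_le_of_le_mul₀ (by positivity) (by positivity) ?_
  calc (mStarEMC (n + 1) (k + 1) ⌊x * (n + 1 : ℕ)⌋₊ : ℝ)
      ≤ (⌊x * (n + 1 : ℕ)⌋₊ + 1) * n.choose k := mod_cast mStarEMC_succ_succ_le _ _ _
    _ ≤ (x * (n + 1 : ℕ) + 1) * n.choose k := by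
        gcongr
        exact Nat.floor_le (by positivity)
    _ = (x + 1 / (n + 1 : ℕ)) * ((n + 1 : ℕ) * n.choose k) := by field_simp
    _ = ((k + 1 : ℕ) * x + (k + 1 : ℕ) / (n + 1 : ℕ)) * (n + 1).choose (k + 1) := by
        rw [hchoose]
        ring

lemma mStarDensity_mul_choose_div_choose_le (hnm : n ≤ m) (hyx : y * n ≤ x * m) :
    mStarDensity k y n * (n.choose k / m.choose k) ≤ mStarDensity k x m := by
  have hmono : (mStarEMC n k ⌊y * n⌋₊ : ℝ) ≤ mStarEMC m k ⌊x * m⌋₊ :=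
    mod_cast mStarEMC_mono k hnm (Nat.floor_mono hyx)
  calc mStarDensity k y n * (n.choose k / m.choose k)
      = mStarEMC n k ⌊y * n⌋₊ / m.choose k * (n.choose k / n.choose k) := by
        unfold mStarDensity
        ring
    _ ≤ mStarEMC n k ⌊y * n⌋₊ / m.choose k :=
        mul_le_of_le_one_right (by positivity) (div_self_le_one _)
    _ ≤ mStarDensity k x m := by
        unfold mStarDensity
        gcongr

lemma isBoundedUnder_le_mStarDensity (k : ℕ) (x : ℝ) (l : Filter ℕ) :
    l.IsBoundedUnder (· ≤ ·) (mStarDensity k x) :=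
  isBoundedUnder_of ⟨1, mStarDensity_le_one k x⟩

lemma isCoboundedUnder_le_mStarDensity (k : ℕ) (x : ℝ) (l : Filter ℕ) [l.NeBot] :
    l.IsCoboundedUnder (· ≤ ·) (mStarDensity k x) :=
  (isBoundedUnder_of ⟨0, mStarDensity_nonneg k x⟩).isCoboundedUnder_le

lemma cStar_nonneg (k : ℕ) (x : ℝ) : 0 ≤ cStar k x :=
  le_limsup_of_frequently_le (.of_forall (mStarDensity_nonneg k x))
    (isBoundedUnder_le_mStarDensity k x _)

lemma cStar_monotone (k : ℕ) : Monotone (cStar k) := fun x y hxy =>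
  limsup_le_limsup (.of_forall (mStarDensity_mono hxy)) (isCoboundedUnder_le_mStarDensity k x _)
    (isBoundedUnder_le_mStarDensity k y _)

lemma cStar_le_mul (hk : 1 ≤ k) (hx : 0 ≤ x) : cStar k x ≤ k * x := by
  have hlim : Tendsto (fun n : ℕ => k * x + (k : ℝ) / n) atTop (𝓝 (k * x)) := by
    simpa using (tendsto_const_div_atTop_nhds_zero_nat (k : ℝ)).const_add (k * x)
  calc cStar k x ≤ limsup (fun n : ℕ => k * x + (k : ℝ) / n) atTop :=
        limsup_le_limsup ((eventually_ge_atTop 1).mono fun n hn => mStarDensity_le hk hx hn)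
          (isCoboundedUnder_le_mStarDensity k x _) hlim.isBoundedUnder_le
    _ = k * x := hlim.limsup_eq

lemma cStar_mul_div_pow_le (k : ℕ) (hx : 0 < x) (hxy : x ≤ y) :
    cStar k y * (x / y) ^ k ≤ cStar k x := by
  have hy : 0 < y := hx.trans_le hxy
  let m : ℕ → ℕ := fun n => ⌈y / x * n⌉₊
  have hle (n : ℕ) : y / x * n ≤ m n := Nat.le_ceil _
  have hm : Tendsto m atTop atTop :=
    tendsto_nat_ceil_atTop.comp (tendsto_natCast_atTop_atTop.const_mul_atTop (by positivity))
  have hratio : Tendsto (fun n : ℕ => (n : ℝ) / m n) atTop (𝓝 (x / y)) := by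
    simpa only [inv_div] using tendsto_natCast_div_nat_ceil_mul_atTop (div_pos hy hx)
  have hchoose : Tendsto (fun n : ℕ => (n.choose k : ℝ) / (m n).choose k) atTop
      (𝓝 ((x / y) ^ k)) := tendsto_choose_div_choose tendsto_id hm hratio k
  have hdensity (n : ℕ) :
      mStarDensity k y n * (n.choose k / (m n).choose k) ≤ mStarDensity k x (m n) := by
    refine mStarDensity_mul_choose_div_choose_le ?_ ?_
    · exact_mod_cast (le_mul_of_one_le_left n.cast_nonneg ((one_le_div hx).mpr hxy)).trans (hle n)
    · calc y * n = x * (y / x * n) := by field_simp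
        _ ≤ x * m n := by gcongr; exact hle n
  calc cStar k y * (x / y) ^ k
      = limsup (mStarDensity k y) atTop *
          liminf (fun n : ℕ => (n.choose k : ℝ) / (m n).choose k) atTop := by
        rw [hchoose.liminf_eq]
        rfl
    _ ≤ limsup (fun n => mStarDensity k y n * (n.choose k / (m n).choose k)) atTop :=
        le_limsup_mul (.of_forall (mStarDensity_nonneg k y)) (isBoundedUnder_le_mStarDensity k y _)
          (.of_forall fun n => by positivity) hchoose.isBoundedUnder_le
    _ ≤ limsup (mStarDensity k x ∘ m) atTop :=
        limsup_le_limsup (.of_forall hdensity)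
          (isBoundedUnder_of ⟨0, fun n => mul_nonneg (mStarDensity_nonneg k y n)
            (by positivity)⟩).isCoboundedUnder_le
          (isBoundedUnder_of ⟨1, fun n => mStarDensity_le_one k x (m n)⟩)
    _ ≤ cStar k x :=
        hm.limsup_comp_le_limsup (isCoboundedUnder_le_mStarDensity k x _)
          (isBoundedUnder_le_mStarDensity k x _)

lemma cStar_div_pow_antitoneOn (k : ℕ) : AntitoneOn (fun x => cStar k x / x ^ k) (Set.Ioi 0) := by
  intro x (hx : 0 < x) y _ hxy
  have h := cStar_mul_div_pow_le k hx hxy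
  rw [div_pow, ← mul_div_assoc, mul_div_right_comm] at h
  exact (le_div_iff₀ (pow_pos hx k)).mpr h

lemma cStar_continuousOn_Ioi (k : ℕ) : ContinuousOn (cStar k) (Set.Ioi 0) :=
  continuousOn_of_monotoneOn_of_antitoneOn_div ((cStar_monotone k).monotoneOn _)
    (cStar_div_pow_antitoneOn k) (continuous_pow k).continuousOn fun _ hx => pow_pos hx k

lemma cStar_zero (hk : 1 ≤ k) : cStar k 0 = 0 :=
  le_antisymm (by simpa using cStar_le_mul hk le_rfl) (cStar_nonneg k 0)

lemma cStar_continuousWithinAt_zero (hk : 1 ≤ k) :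
    ContinuousWithinAt (cStar k) (Set.Ici 0) 0 := by
  have hupper : Tendsto (fun x : ℝ => k * x) (𝓝[≥] 0) (𝓝 (cStar k 0)) :=
    ((continuous_const_mul (k : ℝ)).tendsto' 0 _ (by simp [cStar_zero hk])).mono_left
      nhdsWithin_le_nhds
  refine tendsto_of_tendsto_of_tendsto_of_le_of_le' (by simp [cStar_zero hk]) hupper
    (.of_forall (cStar_nonneg k)) ?_
  filter_upwards [self_mem_nhdsWithin] with x hx using cStar_le_mul hk hx

end

theorem cStar_monotone_continuous_general (k : ℕ) (hk : 1 ≤ k) :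
    MonotoneOn (cStar k) (Set.Ici 0) ∧ ContinuousOn (cStar k) (Set.Ici 0) := by
  refine ⟨(cStar_monotone k).monotoneOn _, fun x hx => ?_⟩
  obtain rfl | hpos := (Set.mem_Ici.mp hx).eq_or_lt
  · exact cStar_continuousWithinAt_zero hk
  · exact ((cStar_continuousOn_Ioi k).continuousAt (Ioi_mem_nhds hpos)).continuousWithinAt

theorem cStar_monotone_continuous (k : ℕ) (hk : 2 ≤ k) :
    MonotoneOn (cStar k) (Set.Ico (0 : ℝ) (1 / (k : ℝ))) ∧
      ContinuousOn (cStar k) (Set.Ico (0 : ℝ) (1 / (k : ℝ))) :=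
  (cStar_monotone_continuous_general k (one_le_two.trans hk)).imp
    (·.mono Set.Ico_subset_Ici_self) (·.mono Set.Ico_subset_Ici_self)
end

section
/- For any integer k ≥ 1 and any real δ > 0 there exist n₀ ∈ ℕ and ε > 0 such that the following holds for every integer n ≥ n₀. Let H be an n-vertex k-uniform hypergraph (a multiset of k-element subsets of an n-element vertex set, multiple edges allowed) with maximum degree Δ(H) > 0 and average degree d(H), and suppose d(H)/Δ(H) = c > 0 and that the codegree of any two distinct vertices (the number of edges, counted with multiplicity, containing both) is at most ε·Δ(H). Then H contains a matching, i.e., a collection of pairwise disjoint edges, covering at least (c − δ)·n vertices. -/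
open Finset

/-!
This is a Rödl nibble. In a multihypergraph `E` with degrees at most `D`, choose every edge
independently with probability `θ / D`; the chosen edges that meet no other chosen edge form a
partial matching, and one continues with the edges that meet no chosen edge. Two devices keep a step
simple. Padding `E` to a `D`-regular multihypergraph by singleton edges makes all vertices survive
with the same probability. And instead of the numbers of remaining edges and vertices separately,
one tracks a linear combination `x * #E / D - y * #U`, for which a bound on the expectation is
enough; up to an error of order `θ ^ 2`, the expected number of matching edges makes up for the loss
in `#E / D`, while `#U` shrinks by a factor `1 - θ / 2`. Only the degrees have to be controlled with
high probability, which Chebyshev's inequality does, since small codegrees make the survival of two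
edges at a vertex nearly independent.
-/

/-! ### Random subsets -/

section RandomSubset

variable {α : Type*} {p : ℝ} {W : Finset α}

/-- The expectation of a function of a random subset of `W` that contains each element of `W`
independently with probability `p`. -/
noncomputable def subsetExpect (p : ℝ) (W : Finset α) : (Finset α → ℝ) →ₗ[ℝ] ℝ :=
  ∑ S ∈ W.powerset, (p ^ #S * (1 - p) ^ (#W - #S)) • LinearMap.proj S

lemma subsetExpect_apply (F : Finset α → ℝ) :
    subsetExpect p W F = ∑ S ∈ W.powerset, p ^ #S * (1 - p) ^ (#W - #S) * F S := by
  simp [subsetExpect]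

lemma subsetExpect_one : subsetExpect p W 1 = 1 := by
  simp [subsetExpect_apply, sum_pow_mul_eq_add_pow]

lemma subsetExpect_mono (hp₀ : 0 ≤ p) (hp₁ : p ≤ 1) {F G : Finset α → ℝ} (h : ∀ S, F S ≤ G S) :
    subsetExpect p W F ≤ subsetExpect p W G := by
  have : 0 ≤ 1 - p := sub_nonneg.2 hp₁
  simp only [subsetExpect_apply]
  gcongr
  exact h _

lemma exists_le_of_le_subsetExpect (hp₀ : 0 < p) (hp₁ : p < 1) {F : Finset α → ℝ} {c : ℝ}
    (h : c ≤ subsetExpect p W F) : ∃ S, c ≤ F S := by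
  have : 0 < 1 - p := sub_pos.2 hp₁
  have hc : subsetExpect p W (c • 1) ≤ subsetExpect p W F := by
    rwa [map_smul, subsetExpect_one, smul_eq_mul, mul_one]
  rw [subsetExpect_apply, subsetExpect_apply] at hc
  obtain ⟨S, -, hS⟩ := exists_le_of_sum_le ⟨∅, empty_mem_powerset W⟩ hc
  exact ⟨S, by simpa using le_of_mul_le_mul_left hS (by positivity)⟩

lemma sq_mul_subsetExpect_lt_le (hp₀ : 0 ≤ p) (hp₁ : p ≤ 1) {a : ℝ} (ha : 0 ≤ a)
    (F : Finset α → ℝ) :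
    a ^ 2 * subsetExpect p W (fun S ↦ if a < F S then 1 else 0) ≤ subsetExpect p W (F ^ 2) := by
  rw [← smul_eq_mul, ← map_smul]
  refine subsetExpect_mono hp₀ hp₁ fun S ↦ ?_
  by_cases hS : a < F S
  · simpa [hS] using pow_le_pow_left₀ ha hS.le 2
  · simpa [hS] using sq_nonneg (F S)

variable [DecidableEq α] {A B : Finset α}

/-- The indicator function of the event that a random set avoids `A`. -/
def avoids (A S : Finset α) : ℝ := if Disjoint S A then 1 else 0

lemma avoids_nonneg (A S : Finset α) : 0 ≤ avoids A S := by
  unfold avoids; positivity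

lemma avoids_mul_avoids (A B : Finset α) : avoids A * avoids B = avoids (A ∪ B) := by
  ext S
  by_cases hA : Disjoint S A <;> simp [avoids, hA]

lemma subsetExpect_avoids (hA : A ⊆ W) : subsetExpect p W (avoids A) = (1 - p) ^ #A := by
  have hfilter : {S ∈ W.powerset | Disjoint S A} = (W \ A).powerset := by
    ext S
    simp [subset_sdiff]
  simp only [subsetExpect_apply, avoids, mul_ite, mul_one, mul_zero]
  rw [← sum_filter, hfilter]
  calc ∑ S ∈ (W \ A).powerset, p ^ #S * (1 - p) ^ (#W - #S)
      = ∑ S ∈ (W \ A).powerset, (1 - p) ^ #A * (p ^ #S * (1 - p) ^ (#(W \ A) - #S)) := by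
        refine sum_congr rfl fun S hS ↦ ?_
        have hSA := card_le_card (mem_powerset.1 hS)
        have hWA := card_sdiff_add_card_eq_card hA
        rw [show #W - #S = #A + (#(W \ A) - #S) by lia, pow_add]
        ring
    _ = (1 - p) ^ #A := by rw [← mul_sum, sum_pow_mul_eq_add_pow]; simp

lemma ite_inter_eq_singleton {a : α} (ha : a ∈ A) :
    (fun S ↦ if S ∩ A = {a} then (1 : ℝ) else 0) = avoids (A.erase a) - avoids A := by
  ext S
  have hA : Disjoint S A ↔ a ∉ S ∧ Disjoint S (A.erase a) := by
    rw [← disjoint_insert_right, insert_erase ha]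
  have hsingle : S ∩ A = {a} ↔ a ∈ S ∧ Disjoint S (A.erase a) := by
    simp only [eq_singleton_iff_unique_mem, disjoint_left, mem_inter, mem_erase]
    grind
  by_cases haS : a ∈ S <;> simp [avoids, hA, hsingle, haS]

lemma subsetExpect_inter_eq_singleton {a : α} (ha : a ∈ A) (hA : A ⊆ W) :
    subsetExpect p W (fun S ↦ if S ∩ A = {a} then 1 else 0) = p * (1 - p) ^ (#A - 1) := by
  rw [ite_inter_eq_singleton ha, map_sub, subsetExpect_avoids hA,
    subsetExpect_avoids ((erase_subset a A).trans hA), ← card_erase_add_one ha, pow_succ,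
    card_erase_of_mem ha, Nat.add_sub_cancel]
  ring

lemma subsetExpect_mul_sub_le (hp₀ : 0 ≤ p) (hp₁ : p ≤ 1) {a : ℕ} (hAW : A ⊆ W) (hBW : B ⊆ W)
    (hA : #A ≤ a) (hB : #B ≤ a) :
    subsetExpect p W ((avoids A - (1 - p) ^ a • 1) * (avoids B - (1 - p) ^ a • 1)) ≤
      (1 - p) ^ #(A ∪ B) - (1 - p) ^ (2 * a) := by
  have hq₀ : 0 ≤ 1 - p := sub_nonneg.2 hp₁
  have hq₁ : 1 - p ≤ 1 := sub_le_self 1 hp₀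
  set m := (1 - p) ^ a with hm
  have hexpand : (avoids A - m • 1) * (avoids B - m • 1) =
      avoids (A ∪ B) - m • avoids A - m • avoids B + m ^ 2 • 1 := by
    rw [← avoids_mul_avoids]
    ext S
    simp only [Pi.mul_apply, Pi.sub_apply, Pi.add_apply, Pi.smul_apply, Pi.one_apply, smul_eq_mul]
    ring
  have hmA : m * m ≤ m * (1 - p) ^ #A := by gcongr; exact pow_le_pow_of_le_one hq₀ hq₁ hA
  have hmB : m * m ≤ m * (1 - p) ^ #B := by gcongr; exact pow_le_pow_of_le_one hq₀ hq₁ hB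
  rw [hexpand, mul_comm 2 a, pow_mul, ← hm]
  simp only [map_add, map_sub, map_smul, subsetExpect_one, subsetExpect_avoids hAW,
    subsetExpect_avoids hBW, subsetExpect_avoids (union_subset hAW hBW), smul_eq_mul]
  linarith

end RandomSubset

lemma one_sub_pow_le_pow_add {p : ℝ} (hp₀ : 0 ≤ p) (hp₁ : p ≤ 1) {a b t : ℕ} (h : a ≤ b + t) :
    (1 - p) ^ b ≤ (1 - p) ^ a + t * p := by
  have hq₀ : 0 ≤ 1 - p := sub_nonneg.2 hp₁
  have hq₁ : 1 - p ≤ 1 := sub_le_self 1 hp₀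
  have hbernoulli : 1 - t * p ≤ (1 - p) ^ t := by
    simpa [sub_eq_add_neg] using one_add_mul_le_pow (a := -p) (by linarith) t
  have hsplit : (1 - p) ^ b * (1 - p) ^ t ≤ (1 - p) ^ a := by
    rw [← pow_add]
    exact pow_le_pow_of_le_one hq₀ hq₁ h
  have hb₀ : 0 ≤ (1 - p) ^ b := by positivity
  have hb₁ : (1 - p) ^ b ≤ 1 := pow_le_one₀ hq₀ hq₁
  have htp : 0 ≤ t * p := by positivity
  nlinarith

/-! ### Multihypergraphs and their regular extensions -/

variable {V : Type*} [DecidableEq V]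

/-- The edges of the multihypergraph `E` at the vertex `v`. Throughout, a multiset of edges is
encoded, as in `Multiset.toEnumFinset`, by a finite set of pairs (edge, label), so that equal edges
carry distinct labels. -/
def edgesAt (E : Finset (Finset V × ℕ)) (v : V) : Finset (Finset V × ℕ) := {e ∈ E | v ∈ e.1}

/-- The edges of the multihypergraph `W` that meet the vertex set `Z`. -/
def edgesMeeting (W : Finset (Finset V × ℕ)) (Z : Finset V) : Finset (Finset V × ℕ) :=
  Z.biUnion (edgesAt W)

/-- The edges of `W` that meet `e` but do not contain `v`. If no edge at `v ∈ e` is chosen, then `e`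
is disjoint from all chosen edges exactly when none of these is chosen. -/
def conflictsAwayFrom (W : Finset (Finset V × ℕ)) (v : V) (e : Finset V × ℕ) :
    Finset (Finset V × ℕ) :=
  edgesMeeting W e.1 \ edgesAt W v

section Counting

variable {E W : Finset (Finset V × ℕ)} {Z : Finset V} {e : Finset V × ℕ} {v : V} {D κ : ℕ}

@[simp]
lemma mem_edgesAt : e ∈ edgesAt E v ↔ e ∈ E ∧ v ∈ e.1 := mem_filter

lemma edgesAt_subset (E : Finset (Finset V × ℕ)) (v : V) : edgesAt E v ⊆ E := filter_subset _ _

lemma edgesAt_mono (h : E ⊆ W) (v : V) : edgesAt E v ⊆ edgesAt W v := filter_subset_filter _ h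

lemma mem_edgesMeeting : e ∈ edgesMeeting W Z ↔ e ∈ W ∧ ∃ v ∈ Z, v ∈ e.1 := by
  simp only [edgesMeeting, mem_biUnion, mem_edgesAt]
  tauto

lemma edgesMeeting_subset (W : Finset (Finset V × ℕ)) (Z : Finset V) : edgesMeeting W Z ⊆ W :=
  biUnion_subset.2 fun v _ ↦ edgesAt_subset W v

lemma edgesAt_subset_edgesMeeting (hv : v ∈ Z) : edgesAt W v ⊆ edgesMeeting W Z :=
  subset_biUnion_of_mem (edgesAt W) hv

lemma conflictsAwayFrom_subset (W : Finset (Finset V × ℕ)) (v : V) (e : Finset V × ℕ) :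
    conflictsAwayFrom W v e ⊆ edgesMeeting W e.1 := sdiff_subset

lemma card_edgesMeeting_le (h : ∀ v ∈ Z, #(edgesAt W v) ≤ D) : #(edgesMeeting W Z) ≤ #Z * D :=
  card_biUnion_le_card_mul _ _ _ h

lemma le_card_edgesMeeting_add (hdeg : ∀ v ∈ Z, D ≤ #(edgesAt W v))
    (hcodeg : ∀ u ∈ Z, ∀ v ∈ Z, u ≠ v → #(edgesAt W u ∩ edgesAt W v) ≤ κ) :
    #Z * D ≤ #(edgesMeeting W Z) + #Z ^ 2 * κ := by
  induction Z using Finset.induction_on with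
  | empty => simp
  | insert u Z hu ih =>
    simp only [forall_mem_insert] at hdeg hcodeg
    have hZ := ih hdeg.2 fun v hv w hw ↦ (hcodeg.2 v hv).2 w hw
    have hunion : edgesMeeting W (insert u Z) = edgesAt W u ∪ edgesMeeting W Z := biUnion_insert
    have hcard := card_union_add_card_inter (edgesAt W u) (edgesMeeting W Z)
    have hinter : #(edgesAt W u ∩ edgesMeeting W Z) ≤ #Z * κ := by
      rw [edgesMeeting, inter_biUnion]
      exact card_biUnion_le_card_mul _ _ _ fun v hv ↦
        hcodeg.1.2 v hv (ne_of_mem_of_not_mem hv hu).symm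
    rw [hunion, card_insert_of_notMem hu]
    nlinarith [hdeg.1, Nat.zero_le κ, Nat.zero_le (#Z * κ)]

end Counting

/-- `E` is a `k`-uniform multihypergraph on the vertex set `U` with degrees at most `D` and
codegrees at most `κ`. -/
structure IsNibbleable (E : Finset (Finset V × ℕ)) (U : Finset V) (k D κ : ℕ) : Prop where
  card_edge : ∀ e ∈ E, #e.1 = k
  edge_subset : ∀ e ∈ E, e.1 ⊆ U
  degree_le : ∀ v ∈ U, #(edgesAt E v) ≤ D
  codegree_le : ∀ u ∈ U, ∀ v ∈ U, u ≠ v → #(edgesAt E u ∩ edgesAt E v) ≤ κ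

/-- `E` is a `k`-uniform multihypergraph on `U`, and `W` is a superset of `E` (not necessarily
uniform) in which every vertex of `U` has degree exactly `D` and codegrees are at most `κ`. -/
structure IsRegularExtension (W E : Finset (Finset V × ℕ)) (U : Finset V) (k D κ : ℕ) : Prop where
  card_edge : ∀ e ∈ E, #e.1 = k
  edge_subset : ∀ e ∈ E, e.1 ⊆ U
  subset : E ⊆ W
  degree_eq : ∀ v ∈ U, #(edgesAt W v) = D
  codegree_le : ∀ u ∈ U, ∀ v ∈ U, u ≠ v → #(edgesAt W u ∩ edgesAt W v) ≤ κ

namespace IsNibbleable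

variable {E E' : Finset (Finset V × ℕ)} {U U' : Finset V} {k D D' κ : ℕ}

lemma card_le_card_mul (h : IsNibbleable E U k D κ) (hk : 1 ≤ k) : #E ≤ #U * D := by
  refine (card_le_card fun e he ↦ ?_).trans (card_edgesMeeting_le h.degree_le)
  obtain ⟨v, hv⟩ : e.1.Nonempty := card_pos.1 (by rw [h.card_edge e he]; exact hk)
  exact mem_edgesMeeting.2 ⟨he, v, h.edge_subset e he hv, hv⟩

lemma pairwiseDisjoint_of_degree_le_one (h : IsNibbleable E U k 1 κ) :
    (E : Set (Finset V × ℕ)).PairwiseDisjoint Prod.fst := by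
  intro e he f hf hef
  refine disjoint_left.2 fun v hve hvf ↦ hef ?_
  exact card_le_one.1 (h.degree_le v (h.edge_subset e he hve)) e (mem_edgesAt.2 ⟨he, hve⟩) f
    (mem_edgesAt.2 ⟨hf, hvf⟩)

lemma mono (h : IsNibbleable E U k D κ) (hE : E' ⊆ E) (hU : U' ⊆ U)
    (hsub : ∀ e ∈ E', e.1 ⊆ U') (hdeg : ∀ v ∈ U', #(edgesAt E' v) ≤ D') :
    IsNibbleable E' U' k D' κ where
  card_edge e he := h.card_edge e (hE he)
  edge_subset := hsub
  degree_le := hdeg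
  codegree_le u hu v hv huv :=
    (card_le_card (inter_subset_inter (edgesAt_mono hE u) (edgesAt_mono hE v))).trans
      (h.codegree_le u (hU hu) v (hU hv) huv)

/-- Singleton edges raise the degrees to `D` without affecting any codegree. -/
lemma exists_isRegularExtension (h : IsNibbleable E U k D κ) :
    ∃ W, IsRegularExtension W E U k D κ := by
  have hfresh (v : V) : ∃ P : Finset (Finset V × ℕ),
      #P = D - #(edgesAt E v) ∧ Disjoint E P ∧ ∀ e ∈ P, e.1 = {v} := by
    have hinj : Function.Injective fun i : ℕ ↦ (({v} : Finset V), i) := Prod.mk_right_injective _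
    obtain ⟨P, hP, hcard⟩ :=
      ((Set.infinite_range_of_injective hinj).sdiff E.finite_toSet).exists_subset_card_eq
        (D - #(edgesAt E v))
    refine ⟨P, hcard, disjoint_right.2 fun e he ↦ (hP he).2, fun e he ↦ ?_⟩
    obtain ⟨i, rfl⟩ := (hP he).1
    rfl
  choose P hcard hdisj hP using hfresh
  have hmem (v : V) (e : Finset V × ℕ) : e ∈ edgesAt (E ∪ U.biUnion P) v ↔
      e ∈ edgesAt E v ∨ v ∈ U ∧ e ∈ P v := by
    simp only [mem_edgesAt, mem_union, mem_biUnion, or_and_right]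
    refine or_congr_right ⟨?_, fun hv ↦ ⟨⟨v, hv⟩, by simp [hP v e hv.2]⟩⟩
    rintro ⟨⟨u, hu, heu⟩, hve⟩
    obtain rfl : v = u := by simpa [hP u e heu] using hve
    exact ⟨hu, heu⟩
  refine ⟨E ∪ U.biUnion P, h.card_edge, h.edge_subset, subset_union_left, fun v hv ↦ ?_,
    fun u hu v hv huv ↦ (card_le_card fun e he ↦ ?_).trans (h.codegree_le u hu v hv huv)⟩
  · have hsplit : edgesAt (E ∪ U.biUnion P) v = edgesAt E v ∪ P v := by
      ext e
      simp only [hmem, hv, true_and, mem_union]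
    rw [hsplit, card_union_of_disjoint ((hdisj v).mono_left (edgesAt_subset E v)), hcard]
    exact Nat.add_sub_of_le (h.degree_le v hv)
  · obtain ⟨heu, hev⟩ := mem_inter.1 he
    have hne (w : V) (heP : e ∈ P w) : u = w ∧ v = w := by
      simpa [hP w e heP] using And.intro (mem_edgesAt.1 heu).2 (mem_edgesAt.1 hev).2
    rw [hmem] at heu hev
    grind

end IsNibbleable

namespace IsRegularExtension

variable {E W : Finset (Finset V × ℕ)} {U : Finset V} {e f : Finset V × ℕ} {v : V} {k D κ : ℕ}

lemma card_edgesMeeting_le (h : IsRegularExtension W E U k D κ) (he : e ∈ E) :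
    #(edgesMeeting W e.1) ≤ k * D := by
  rw [← h.card_edge e he]
  exact _root_.card_edgesMeeting_le fun v hv ↦ (h.degree_eq v (h.edge_subset e he hv)).le

lemma card_conflictsAwayFrom_le (h : IsRegularExtension W E U k D κ) (he : e ∈ edgesAt E v) :
    #(conflictsAwayFrom W v e) ≤ (k - 1) * D := by
  obtain ⟨he, hve⟩ := mem_edgesAt.1 he
  rw [conflictsAwayFrom, card_sdiff_of_subset (edgesAt_subset_edgesMeeting hve),
    h.degree_eq v (h.edge_subset e he hve), Nat.sub_one_mul]
  exact Nat.sub_le_sub_right (h.card_edgesMeeting_le he) D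

lemma le_card_conflictsAwayFrom_union_add (h : IsRegularExtension W E U k D κ) (hk : 1 ≤ k)
    (he : e ∈ E) (hf : f ∈ E) (hef : e.1 ∩ f.1 = {v}) :
    2 * ((k - 1) * D) ≤
      #(conflictsAwayFrom W v e ∪ conflictsAwayFrom W v f) + 4 * k ^ 2 * κ := by
  have hv : v ∈ e.1 ∩ f.1 := by simp [hef]
  have hef_subset : e.1 ∪ f.1 ⊆ U := union_subset (h.edge_subset e he) (h.edge_subset f hf)
  have hunion : conflictsAwayFrom W v e ∪ conflictsAwayFrom W v f =
      edgesMeeting W (e.1 ∪ f.1) \ edgesAt W v := by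
    simp only [conflictsAwayFrom, edgesMeeting, union_biUnion, union_sdiff_distrib]
  have hsdiff := card_sdiff_add_card_eq_card
    (edgesAt_subset_edgesMeeting (W := W) (mem_union_left f.1 (mem_inter.1 hv).1))
  have hmeet := le_card_edgesMeeting_add (fun u hu ↦ (h.degree_eq u (hef_subset hu)).ge)
    fun u hu w hw ↦ h.codegree_le u (hef_subset hu) w (hef_subset hw)
  have hcard := card_union_add_card_inter e.1 f.1
  rw [hef, h.card_edge e he, h.card_edge f hf, card_singleton] at hcard
  rw [h.degree_eq v (hef_subset (mem_union_left _ (mem_inter.1 hv).1))] at hsdiff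
  obtain ⟨j, rfl⟩ := Nat.exists_eq_add_of_le' hk
  rw [show #(e.1 ∪ f.1) = 2 * j + 1 by lia] at hmeet
  rw [hunion, Nat.add_sub_cancel]
  nlinarith [Nat.zero_le κ, Nat.zero_le (j * κ)]

lemma card_inter_ne_singleton_le (h : IsRegularExtension W E U k D κ) (he : e ∈ edgesAt E v) :
    #{f ∈ edgesAt E v | e.1 ∩ f.1 ≠ {v}} ≤ k * κ := by
  obtain ⟨he, hve⟩ := mem_edgesAt.1 he
  have hsub : {f ∈ edgesAt E v | e.1 ∩ f.1 ≠ {v}} ⊆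
      (e.1.erase v).biUnion fun u ↦ edgesAt W u ∩ edgesAt W v := by
    intro f hf
    obtain ⟨hf, hne⟩ := mem_filter.1 hf
    obtain ⟨hf, hvf⟩ := mem_edgesAt.1 hf
    obtain ⟨u, hu, huv⟩ : ∃ u ∈ e.1 ∩ f.1, u ≠ v := by
      by_contra! hunique
      exact hne (eq_singleton_iff_unique_mem.2 ⟨mem_inter.2 ⟨hve, hvf⟩, hunique⟩)
    have hfW := h.subset hf
    simp only [mem_biUnion, mem_erase, mem_inter, mem_edgesAt] at hu ⊢
    exact ⟨u, ⟨huv, hu.1⟩, ⟨hfW, hu.2⟩, hfW, hvf⟩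
  calc _ ≤ #(e.1.erase v) * κ := (card_le_card hsub).trans <|
        card_biUnion_le_card_mul _ _ κ fun u hu ↦ h.codegree_le u
          (h.edge_subset e he (mem_of_mem_erase hu)) v (h.edge_subset e he hve) (ne_of_mem_erase hu)
    _ ≤ k * κ := by rw [← h.card_edge e he]; gcongr; exact erase_subset v e.1

end IsRegularExtension

/-! ### Residual degrees -/

/-- The number of edges of `E` at `v` that conflict with no chosen edge, except possibly at `v`.
Ignoring the conflicts at `v` makes the summands nearly independent. -/
noncomputable def residualDegree (W E : Finset (Finset V × ℕ)) (v : V) :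
    Finset (Finset V × ℕ) → ℝ :=
  ∑ e ∈ edgesAt E v, avoids (conflictsAwayFrom W v e)

namespace IsRegularExtension

variable {E W : Finset (Finset V × ℕ)} {U : Finset V} {e f : Finset V × ℕ} {v : V} {k D κ : ℕ}
  {p : ℝ}

lemma degree_le (h : IsRegularExtension W E U k D κ) (hv : v ∈ U) : #(edgesAt E v) ≤ D :=
  h.degree_eq v hv ▸ card_le_card (edgesAt_mono h.subset v)

lemma subsetExpect_covariance_le (h : IsRegularExtension W E U k D κ) (hk : 1 ≤ k) (hp₀ : 0 ≤ p)
    (hp₁ : p ≤ 1) (he : e ∈ edgesAt E v) (hf : f ∈ edgesAt E v) :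
    subsetExpect p W ((avoids (conflictsAwayFrom W v e) - (1 - p) ^ ((k - 1) * D) • 1) *
        (avoids (conflictsAwayFrom W v f) - (1 - p) ^ ((k - 1) * D) • 1)) ≤
      4 * k ^ 2 * κ * p + if e.1 ∩ f.1 ≠ {v} then 1 else 0 := by
  have hq₀ : 0 ≤ 1 - p := sub_nonneg.2 hp₁
  have hq₁ : 1 - p ≤ 1 := sub_le_self 1 hp₀
  have hsub (e : Finset V × ℕ) : conflictsAwayFrom W v e ⊆ W :=
    (conflictsAwayFrom_subset W v e).trans (edgesMeeting_subset W e.1)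
  refine (subsetExpect_mul_sub_le hp₀ hp₁ (hsub e) (hsub f) (h.card_conflictsAwayFrom_le he)
    (h.card_conflictsAwayFrom_le hf)).trans ?_
  split_ifs with hef
  · have hpow₀ : 0 ≤ (1 - p) ^ (2 * ((k - 1) * D)) := by positivity
    have hpow₁ := pow_le_one₀ hq₀ hq₁ (n := #(conflictsAwayFrom W v e ∪ conflictsAwayFrom W v f))
    have herr : 0 ≤ 4 * k ^ 2 * κ * p := by positivity
    linarith
  · have hunion := h.le_card_conflictsAwayFrom_union_add hk (mem_edgesAt.1 he).1
      (mem_edgesAt.1 hf).1 (not_not.1 hef)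
    have hpow := one_sub_pow_le_pow_add hp₀ hp₁ hunion
    push_cast at hpow
    linarith

lemma sum_subsetExpect_covariance_le (h : IsRegularExtension W E U k D κ) (hk : 1 ≤ k)
    (hp₀ : 0 ≤ p) (hp₁ : p ≤ 1) (hpD : p * D ≤ 1) (he : e ∈ edgesAt E v) :
    ∑ f ∈ edgesAt E v,
      subsetExpect p W ((avoids (conflictsAwayFrom W v e) - (1 - p) ^ ((k - 1) * D) • 1) *
        (avoids (conflictsAwayFrom W v f) - (1 - p) ^ ((k - 1) * D) • 1)) ≤
      5 * k ^ 2 * κ := by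
  have hk' : (k : ℝ) ≤ k ^ 2 := by exact_mod_cast Nat.le_self_pow two_ne_zero k
  have hdeg : (#(edgesAt E v) : ℝ) ≤ D := by
    exact_mod_cast h.degree_le (h.edge_subset e (mem_edgesAt.1 he).1 (mem_edgesAt.1 he).2)
  have hbad : (#{f ∈ edgesAt E v | e.1 ∩ f.1 ≠ {v}} : ℝ) ≤ k * κ := by
    exact_mod_cast h.card_inter_ne_singleton_le he
  calc _ ≤ ∑ f ∈ edgesAt E v, (4 * k ^ 2 * κ * p + if e.1 ∩ f.1 ≠ {v} then 1 else 0) :=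
        sum_le_sum fun f hf ↦ h.subsetExpect_covariance_le hk hp₀ hp₁ he hf
    _ = #(edgesAt E v) * (4 * k ^ 2 * κ * p) + #{f ∈ edgesAt E v | e.1 ∩ f.1 ≠ {v}} := by
        rw [sum_add_distrib, sum_const, nsmul_eq_mul, sum_boole]
    _ ≤ D * (4 * k ^ 2 * κ * p) + k * κ := by gcongr
    _ = 4 * k ^ 2 * κ * (p * D) + k * κ := by ring
    _ ≤ 4 * k ^ 2 * κ * 1 + k ^ 2 * κ := by gcongr
    _ = 5 * k ^ 2 * κ := by ring

lemma subsetExpect_residualDegree_sub_sq_le (h : IsRegularExtension W E U k D κ) (hk : 1 ≤ k)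
    (hp₀ : 0 ≤ p) (hp₁ : p ≤ 1) (hpD : p * D ≤ 1) (hv : v ∈ U) :
    subsetExpect p W
        ((residualDegree W E v - (#(edgesAt E v) * (1 - p) ^ ((k - 1) * D)) • 1) ^ 2) ≤
      5 * k ^ 2 * κ * D := by
  set m := (1 - p) ^ ((k - 1) * D)
  have hexpand : (residualDegree W E v - (#(edgesAt E v) * m) • 1) ^ 2 =
      ∑ e ∈ edgesAt E v, ∑ f ∈ edgesAt E v,
        (avoids (conflictsAwayFrom W v e) - m • 1) *
          (avoids (conflictsAwayFrom W v f) - m • 1) := by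
    rw [← sum_mul_sum, ← sq, sum_sub_distrib, sum_const, residualDegree, mul_smul,
      Nat.cast_smul_eq_nsmul]
  have hdeg : (#(edgesAt E v) : ℝ) ≤ D := by exact_mod_cast h.degree_le hv
  simp only [hexpand, map_sum]
  calc _ ≤ ∑ e ∈ edgesAt E v, (5 * k ^ 2 * κ : ℝ) :=
        sum_le_sum fun e he ↦ h.sum_subsetExpect_covariance_le hk hp₀ hp₁ hpD he
    _ = 5 * k ^ 2 * κ * #(edgesAt E v) := by rw [sum_const, nsmul_eq_mul, mul_comm]
    _ ≤ 5 * k ^ 2 * κ * D := by gcongr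

lemma subsetExpect_lt_residualDegree_le (h : IsRegularExtension W E U k D κ) (hk : 1 ≤ k)
    (hp₀ : 0 ≤ p) (hp₁ : p ≤ 1) (hpD : p * D ≤ 1) (hv : v ∈ U) {t : ℝ} (ht : 0 ≤ t) :
    (t * D) ^ 2 * subsetExpect p W
        (fun S ↦ if ((1 - p) ^ ((k - 1) * D) + t) * D < residualDegree W E v S then 1 else 0) ≤
      5 * k ^ 2 * κ * D := by
  set m := (1 - p) ^ ((k - 1) * D) with hm
  have hm₀ : 0 ≤ m := pow_nonneg (sub_nonneg.2 hp₁) _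
  have hdeg : (#(edgesAt E v) : ℝ) ≤ D := by exact_mod_cast h.degree_le hv
  refine le_trans ?_ ((sq_mul_subsetExpect_lt_le hp₀ hp₁ (by positivity : 0 ≤ t * D) _).trans
    (h.subsetExpect_residualDegree_sub_sq_le hk hp₀ hp₁ hpD hv))
  refine mul_le_mul_of_nonneg_left (subsetExpect_mono hp₀ hp₁ fun S ↦ ?_) (by positivity)
  simp only [Pi.sub_apply, Pi.smul_apply, Pi.one_apply, smul_eq_mul, mul_one, ← hm]
  have himp (hS : (m + t) * D < residualDegree W E v S) :
      t * D < residualDegree W E v S - #(edgesAt E v) * m := by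
    linarith [mul_le_mul_of_nonneg_right hdeg hm₀]
  by_cases hS : (m + t) * D < residualDegree W E v S
  · rw [if_pos hS, if_pos (himp hS)]
  · rw [if_neg hS]
    split_ifs <;> norm_num

end IsRegularExtension

/-! ### A nibble step -/

lemma one_sub_mul_le_one_sub_div_pow {θ : ℝ} (hθ : θ ≤ 1) {D : ℕ} (hD : 1 ≤ D) (i : ℕ) :
    1 - i * θ ≤ (1 - θ / D) ^ (i * D) := by
  have hD' : (1 : ℝ) ≤ D := by exact_mod_cast hD
  have hp : θ / D ≤ 1 := div_le_one_of_le₀ (hθ.trans hD') (by positivity)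
  have hbernoulli := one_add_mul_le_pow (a := -(θ / D)) (by linarith) (i * D)
  calc 1 - i * θ = 1 + (i * D : ℕ) * -(θ / D) := by push_cast; field_simp; ring
    _ ≤ (1 - θ / D) ^ (i * D) := by rwa [sub_eq_add_neg 1 (θ / D)]

lemma one_sub_div_pow_le_one_sub_half {θ : ℝ} (hθ₀ : 0 ≤ θ) (hθ₁ : θ ≤ 1) {D : ℕ} (hD : 1 ≤ D) :
    (1 - θ / D) ^ D ≤ 1 - θ / 2 := by
  have hD' : (1 : ℝ) ≤ D := by exact_mod_cast hD
  calc (1 - θ / D) ^ D ≤ Real.exp (-θ) := Real.one_sub_div_pow_le_exp_neg (hθ₁.trans hD')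
    _ ≤ (θ + 1)⁻¹ := by
        rw [Real.exp_neg]
        exact inv_anti₀ (by linarith) (Real.add_one_le_exp θ)
    _ ≤ 1 - θ / 2 := by
        rw [inv_le_iff_one_le_mul₀ (by linarith)]
        nlinarith

/-- An upper bound for the degrees after choosing each edge with probability `θ / D`: the limiting
expected residual degree plus a slack of `θ ^ 2 / 4 * D` for deviations from it. -/
noncomputable def nibbleDegree (θ : ℝ) (k D : ℕ) : ℝ :=
  ((1 - θ / D) ^ ((k - 1) * D) + θ ^ 2 / 4) * D

section NibbleParameters

variable {θ : ℝ} {k D : ℕ}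

lemma half_le_one_sub_div_pow (hθ : θ ≤ 1) (hkθ : k * θ ≤ 1 / 2) (hD : 1 ≤ D) :
    1 / 2 ≤ (1 - θ / D) ^ (k * D) :=
  le_trans (by linarith) (one_sub_mul_le_one_sub_div_pow hθ hD k)

lemma half_le_nibbleDegree (hθ₀ : 0 ≤ θ) (hθ₁ : θ ≤ 1) (hkθ : k * θ ≤ 1 / 2) (hD : 1 ≤ D) :
    (D : ℝ) / 2 ≤ nibbleDegree θ k D := by
  have hpred : ((k - 1 : ℕ) : ℝ) * θ ≤ 1 / 2 :=
    le_trans (by gcongr; exact Nat.sub_le k 1) hkθ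
  have hhalf := half_le_one_sub_div_pow hθ₁ hpred hD
  rw [nibbleDegree, div_eq_inv_mul]
  gcongr
  nlinarith [sq_nonneg θ]

lemma le_four_mul_floor_nibbleDegree (hθ₀ : 0 ≤ θ) (hθ₁ : θ ≤ 1) (hkθ : k * θ ≤ 1 / 2)
    (hD : 2 ≤ D) : D ≤ 4 * ⌊nibbleDegree θ k D⌋₊ := by
  have hhalf := half_le_nibbleDegree hθ₀ hθ₁ hkθ (by lia : 1 ≤ D)
  have hD' : (2 : ℝ) ≤ D := by exact_mod_cast hD
  have hpos : 1 ≤ ⌊nibbleDegree θ k D⌋₊ := Nat.le_floor (by push_cast; linarith)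
  have hlt : (D : ℝ) < 2 * (⌊nibbleDegree θ k D⌋₊ + 1) := by
    linarith [Nat.lt_floor_add_one (nibbleDegree θ k D)]
  have hlt' : D < 2 * (⌊nibbleDegree θ k D⌋₊ + 1) := by exact_mod_cast hlt
  lia

/-- The gain `θ` from the chosen edges compensates the loss `1 - q ≤ θ` in the ratio of edges to
degree, up to second order. -/
lemma one_sub_mul_sq_le_nibble_gain {q m c : ℝ} (hθ : 0 ≤ θ) (hq₁ : q ≤ 1) (hq : 1 - θ ≤ q)
    (hm : 1 / 2 ≤ m) (hqm : 1 - c * θ ≤ q * m) :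
    1 - (c + 1) * θ ^ 2 ≤ θ * (q * m) + (q * m - θ ^ 2 / 4) / (m + θ ^ 2 / 4) := by
  have hratio : q - θ ^ 2 ≤ (q * m - θ ^ 2 / 4) / (m + θ ^ 2 / 4) := by
    rw [le_div_iff₀ (by positivity)]
    nlinarith [mul_le_mul_of_nonneg_left hm (sq_nonneg θ),
      mul_le_mul_of_nonneg_left hq₁ (sq_nonneg θ), sq_nonneg (θ ^ 2)]
  nlinarith [mul_le_mul_of_nonneg_left hqm hθ]

lemma one_sub_mul_sq_div_le_nibbleDegree (hθ₀ : 0 ≤ θ) (hθ₁ : θ ≤ 1) (hk : 1 ≤ k)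
    (hkθ : k * θ ≤ 1 / 2) (hD : 1 ≤ D) :
    (1 - (k + 1) * θ ^ 2) / D ≤ θ / D * (1 - θ / D) ^ (k * D) +
      ((1 - θ / D) ^ (k * D) - θ ^ 2 / 4) / nibbleDegree θ k D := by
  have hD' : (1 : ℝ) ≤ D := by exact_mod_cast hD
  have hp : θ / D ≤ 1 := div_le_one_of_le₀ (hθ₁.trans hD') (by positivity)
  have hpred : ((k - 1 : ℕ) : ℝ) * θ ≤ 1 / 2 :=
    le_trans (by gcongr; exact Nat.sub_le k 1) hkθ
  have hsplit : (1 - θ / D) ^ (k * D) = (1 - θ / D) ^ D * (1 - θ / D) ^ ((k - 1) * D) := by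
    rw [← pow_add, ← one_add_mul, Nat.add_sub_cancel' hk]
  have hq := one_sub_mul_le_one_sub_div_pow hθ₁ hD 1
  have hq₁ : (1 - θ / D) ^ D ≤ 1 :=
    pow_le_one₀ (sub_nonneg.2 hp) (sub_le_self 1 (by positivity))
  have hgain := one_sub_mul_sq_le_nibble_gain hθ₀ hq₁ (by simpa using hq)
    (half_le_one_sub_div_pow hθ₁ hpred hD)
    (hsplit ▸ one_sub_mul_le_one_sub_div_pow hθ₁ hD k)
  rw [← hsplit] at hgain
  exact (div_le_div_of_nonneg_right hgain (by positivity)).trans_eq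
    (by rw [nibbleDegree, add_div, div_div, mul_div_right_comm])

end NibbleParameters

/-- The edges of `E` that are chosen by `S` and meet no other edge in `S`. -/
def isolatedEdges (W E S : Finset (Finset V × ℕ)) : Finset (Finset V × ℕ) :=
  {e ∈ E | S ∩ edgesMeeting W e.1 = {e}}

/-- The vertices of `U` that lie on no edge of `S`. -/
def uncovered (W : Finset (Finset V × ℕ)) (U : Finset V) (S : Finset (Finset V × ℕ)) : Finset V :=
  {v ∈ U | Disjoint S (edgesAt W v)}

/-- The edges of `E` that meet no edge of `S` and contain no vertex of residual degree exceeding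
`R`. -/
noncomputable def survivors (W E : Finset (Finset V × ℕ)) (R : ℝ) (S : Finset (Finset V × ℕ)) :
    Finset (Finset V × ℕ) :=
  {e ∈ E | Disjoint S (edgesMeeting W e.1) ∧ ∀ v ∈ e.1, residualDegree W E v S ≤ R}

section NibbleOutcome

variable {E W S : Finset (Finset V × ℕ)} {U : Finset V} {R : ℝ}

lemma mem_of_mem_isolatedEdges {e : Finset V × ℕ} (he : e ∈ isolatedEdges W E S) : e ∈ S := by
  have hmem : e ∈ S ∩ edgesMeeting W e.1 := by simp [(mem_filter.1 he).2]
  exact (mem_inter.1 hmem).1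

lemma pairwiseDisjoint_isolatedEdges (hEW : E ⊆ W) :
    (isolatedEdges W E S : Set (Finset V × ℕ)).PairwiseDisjoint Prod.fst := by
  intro e he f hf hef
  refine disjoint_left.2 fun v hve hvf ↦ hef ?_
  have hmem : e ∈ S ∩ edgesMeeting W f.1 := mem_inter.2 ⟨mem_of_mem_isolatedEdges he,
    mem_edgesMeeting.2 ⟨hEW (mem_filter.1 he).1, v, hvf, hve⟩⟩
  rwa [(mem_filter.1 hf).2, mem_singleton] at hmem

lemma disjoint_uncovered_of_mem_isolatedEdges (hEW : E ⊆ W) {e : Finset V × ℕ}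
    (he : e ∈ isolatedEdges W E S) : Disjoint e.1 (uncovered W U S) := by
  refine disjoint_left.2 fun v hve hv ↦ ?_
  exact disjoint_left.1 (mem_filter.1 hv).2 (mem_of_mem_isolatedEdges he)
    (mem_edgesAt.2 ⟨hEW (mem_filter.1 he).1, hve⟩)

lemma subset_uncovered_of_mem_survivors {e : Finset V × ℕ} (heU : e.1 ⊆ U)
    (he : e ∈ survivors W E R S) : e.1 ⊆ uncovered W U S := fun _ hv ↦
  mem_filter.2 ⟨heU hv, (mem_filter.1 he).2.1.mono_right (edgesAt_subset_edgesMeeting hv)⟩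

lemma card_edgesAt_survivors_le (hR : 0 ≤ R) (v : V) :
    (#(edgesAt (survivors W E R S) v) : ℝ) ≤ R := by
  obtain hempty | ⟨e, he⟩ := (edgesAt (survivors W E R S) v).eq_empty_or_nonempty
  · simpa [hempty] using hR
  obtain ⟨he, hve⟩ := mem_edgesAt.1 he
  calc (#(edgesAt (survivors W E R S) v) : ℝ)
      = ∑ f ∈ edgesAt (survivors W E R S) v, avoids (conflictsAwayFrom W v f) S := by
        rw [card_eq_sum_ones, Nat.cast_sum]
        refine sum_congr rfl fun f hf ↦ ?_
        have hdisj := (mem_filter.1 (mem_edgesAt.1 hf).1).2.1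
        rw [avoids, if_pos (hdisj.mono_right (conflictsAwayFrom_subset W v f)), Nat.cast_one]
    _ ≤ ∑ f ∈ edgesAt E v, avoids (conflictsAwayFrom W v f) S :=
        sum_le_sum_of_subset_of_nonneg (edgesAt_mono (filter_subset _ E) v)
          fun f _ _ ↦ avoids_nonneg _ S
    _ = residualDegree W E v S := by rw [residualDegree, Finset.sum_apply]
    _ ≤ R := (mem_filter.1 he).2.2 v hve

end NibbleOutcome

namespace IsRegularExtension

variable {E W : Finset (Finset V × ℕ)} {U : Finset V} {v : V} {k D κ : ℕ} {p θ : ℝ}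

lemma subsetExpect_nibbleDegree_lt_le (h : IsRegularExtension W E U k D κ) (hk : 1 ≤ k)
    (hD : 1 ≤ D) (hθ₀ : 0 < θ) (hθ₁ : θ ≤ 1) (hκ : κ ≤ θ ^ 6 / (320 * k ^ 3) * D) (hv : v ∈ U) :
    subsetExpect (θ / D) W (fun S ↦ if nibbleDegree θ k D < residualDegree W E v S then 1 else 0) ≤
      θ ^ 2 / (4 * k) := by
  have hD' : (1 : ℝ) ≤ D := by exact_mod_cast hD
  have hchebyshev := h.subsetExpect_lt_residualDegree_le hk (by positivity : 0 ≤ θ / D)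
    (div_le_one_of_le₀ (hθ₁.trans hD') (by positivity))
    (by rwa [div_mul_cancel₀ _ (by positivity)]) hv (by positivity : 0 ≤ θ ^ 2 / 4)
  refine le_of_mul_le_mul_left (hchebyshev.trans ?_) (by positivity : 0 < (θ ^ 2 / 4 * D) ^ 2)
  calc 5 * k ^ 2 * κ * D ≤ 5 * k ^ 2 * (θ ^ 6 / (320 * k ^ 3) * D) * D := by gcongr
    _ = (θ ^ 2 / 4 * D) ^ 2 * (θ ^ 2 / (4 * k)) := by field_simp; norm_num

lemma le_subsetExpect_card_isolatedEdges (h : IsRegularExtension W E U k D κ) (hk : 1 ≤ k)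
    (hp₀ : 0 ≤ p) (hp₁ : p ≤ 1) :
    #E * (p * (1 - p) ^ (k * D)) ≤ subsetExpect p W (fun S ↦ (#(isolatedEdges W E S) : ℝ)) := by
  have hsum : (fun S ↦ (#(isolatedEdges W E S) : ℝ)) =
      ∑ e ∈ E, fun S ↦ if S ∩ edgesMeeting W e.1 = {e} then 1 else 0 := by
    ext S
    rw [Finset.sum_apply, sum_boole, isolatedEdges]
  rw [hsum, map_sum, ← nsmul_eq_mul]
  refine card_nsmul_le_sum _ _ _ fun e he ↦ ?_
  obtain ⟨v, hv⟩ : e.1.Nonempty := card_pos.1 (by rw [h.card_edge e he]; exact hk)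
  rw [subsetExpect_inter_eq_singleton (mem_edgesMeeting.2 ⟨h.subset he, v, hv, hv⟩)
    (edgesMeeting_subset W e.1)]
  exact mul_le_mul_of_nonneg_left (pow_le_pow_of_le_one (sub_nonneg.2 hp₁) (sub_le_self 1 hp₀)
    ((Nat.sub_le _ 1).trans (h.card_edgesMeeting_le he))) hp₀

lemma le_subsetExpect_card_survivors (h : IsRegularExtension W E U k D κ) (hp₀ : 0 ≤ p)
    (hp₁ : p ≤ 1) {R η : ℝ}
    (hη : ∀ v ∈ U, subsetExpect p W (fun S ↦ if R < residualDegree W E v S then 1 else 0) ≤ η) :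
    #E * ((1 - p) ^ (k * D) - k * η) ≤ subsetExpect p W (fun S ↦ (#(survivors W E R S) : ℝ)) := by
  have hsum : (fun S ↦ (#(survivors W E R S) : ℝ)) =
      ∑ e ∈ E, fun S ↦ if Disjoint S (edgesMeeting W e.1) ∧
        ∀ v ∈ e.1, residualDegree W E v S ≤ R then 1 else 0 := by
    ext S
    rw [Finset.sum_apply, sum_boole, survivors]
  rw [hsum, map_sum, ← nsmul_eq_mul]
  refine card_nsmul_le_sum _ _ _ fun e he ↦ ?_
  have hunionBound : subsetExpect p W (avoids (edgesMeeting W e.1) -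
      ∑ v ∈ e.1, fun S ↦ if R < residualDegree W E v S then 1 else 0) ≤
      subsetExpect p W (fun S ↦ if Disjoint S (edgesMeeting W e.1) ∧
        ∀ v ∈ e.1, residualDegree W E v S ≤ R then 1 else 0) := by
    refine subsetExpect_mono hp₀ hp₁ fun S ↦ ?_
    simp only [Pi.sub_apply, Finset.sum_apply, avoids]
    have hnonneg : ∀ v ∈ e.1, (0 : ℝ) ≤ if R < residualDegree W E v S then 1 else 0 :=
      fun v _ ↦ by positivity
    have hsum := sum_nonneg hnonneg
    by_cases hR : ∀ v ∈ e.1, residualDegree W E v S ≤ R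
    · rw [if_congr (and_iff_left hR) rfl rfl]
      exact sub_le_self _ hsum
    · obtain ⟨v, hv, hRv⟩ := by simpa only [not_forall, not_le, exists_prop] using hR
      have hone := single_le_sum hnonneg hv
      rw [if_pos hRv] at hone
      rw [if_neg (mt And.right hR)]
      split_ifs <;> linarith
  refine le_trans ?_ hunionBound
  rw [map_sub, map_sum, subsetExpect_avoids (edgesMeeting_subset W e.1)]
  refine sub_le_sub (pow_le_pow_of_le_one (sub_nonneg.2 hp₁) (sub_le_self 1 hp₀)
    (h.card_edgesMeeting_le he)) ?_
  rw [← h.card_edge e he, ← nsmul_eq_mul]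
  exact sum_le_card_nsmul _ _ _ fun v hv ↦ hη v (h.edge_subset e he hv)

lemma subsetExpect_card_uncovered (h : IsRegularExtension W E U k D κ) :
    subsetExpect p W (fun S ↦ (#(uncovered W U S) : ℝ)) = #U * (1 - p) ^ D := by
  have hsum : (fun S ↦ (#(uncovered W U S) : ℝ)) = ∑ v ∈ U, avoids (edgesAt W v) := by
    ext S
    simp only [Finset.sum_apply, avoids, sum_boole, uncovered]
  rw [hsum, map_sum, ← nsmul_eq_mul]
  refine sum_eq_card_nsmul fun v hv ↦ ?_
  rw [subsetExpect_avoids (edgesAt_subset W v), h.degree_eq v hv]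

lemma le_subsetExpect_add_subsetExpect_survivors (h : IsRegularExtension W E U k D κ)
    (hk : 1 ≤ k) (hD : 2 ≤ D) (hθ₀ : 0 < θ) (hθ₁ : θ ≤ 1) (hkθ : k * θ ≤ 1 / 2)
    (hκ : κ ≤ θ ^ 6 / (320 * k ^ 3) * D) {x : ℝ} (hx₀ : 0 ≤ x) (hx₁ : x ≤ 1) :
    x * (1 - (k + 1) * θ ^ 2) * #E / D ≤
      subsetExpect (θ / D) W (fun S ↦ (#(isolatedEdges W E S) : ℝ)) + x / ⌊nibbleDegree θ k D⌋₊ *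
        subsetExpect (θ / D) W (fun S ↦ (#(survivors W E (nibbleDegree θ k D) S) : ℝ)) := by
  have hD₁ : 1 ≤ D := by lia
  have hD' : (1 : ℝ) ≤ D := by exact_mod_cast hD₁
  set p := θ / D
  set R := nibbleDegree θ k D
  have hp₀ : 0 ≤ p := by positivity
  have hp₁ : p ≤ 1 := div_le_one_of_le₀ (hθ₁.trans hD') (by positivity)
  have hfloor : (0 : ℝ) < ⌊R⌋₊ := by
    have := le_four_mul_floor_nibbleDegree hθ₀.le hθ₁ hkθ hD
    exact_mod_cast (by lia : 0 < ⌊R⌋₊)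
  have hR : ⌊R⌋₊ ≤ R := Nat.floor_le (Nat.pos_of_floor_pos (by exact_mod_cast hfloor)).le
  have hq : 0 ≤ (1 - p) ^ (k * D) - θ ^ 2 / 4 := by
    nlinarith [half_le_one_sub_div_pow hθ₁ hkθ hD₁]
  have hsurvivors : #E * ((1 - p) ^ (k * D) - θ ^ 2 / 4) ≤
      subsetExpect p W (fun S ↦ (#(survivors W E R S) : ℝ)) := by
    have htail := h.le_subsetExpect_card_survivors hp₀ hp₁
      fun v hv ↦ h.subsetExpect_nibbleDegree_lt_le hk hD₁ hθ₀ hθ₁ hκ hv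
    rwa [show (k : ℝ) * (θ ^ 2 / (4 * k)) = θ ^ 2 / 4 by field_simp] at htail
  calc x * (1 - (k + 1) * θ ^ 2) * #E / D = x * (#E * ((1 - (k + 1) * θ ^ 2) / D)) := by ring
    _ ≤ x * (#E * (p * (1 - p) ^ (k * D) + ((1 - p) ^ (k * D) - θ ^ 2 / 4) / R)) := by
        gcongr
        exact one_sub_mul_sq_div_le_nibbleDegree hθ₀.le hθ₁ hk hkθ hD₁
    _ = x * (#E * (p * (1 - p) ^ (k * D))) +
          x / R * (#E * ((1 - p) ^ (k * D) - θ ^ 2 / 4)) := by ring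
    _ ≤ 1 * (#E * (p * (1 - p) ^ (k * D))) +
          x / ⌊R⌋₊ * (#E * ((1 - p) ^ (k * D) - θ ^ 2 / 4)) := by gcongr
    _ ≤ _ := by
        rw [one_mul]
        gcongr
        exact h.le_subsetExpect_card_isolatedEdges hk hp₀ hp₁

/-- Since the potential is linear in the three counts, its expectation alone provides a good choice
`S`, without concentration of any count. -/
lemma le_subsetExpect_potential (h : IsRegularExtension W E U k D κ) (hk : 1 ≤ k) (hD : 2 ≤ D)
    (hθ₀ : 0 < θ) (hθ₁ : θ ≤ 1) (hkθ : k * θ ≤ 1 / 2) (hκ : κ ≤ θ ^ 6 / (320 * k ^ 3) * D)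
    {x y : ℝ} (hx₀ : 0 ≤ x) (hx₁ : x ≤ 1) (hy : 0 ≤ y) :
    x * (1 - (k + 1) * θ ^ 2) * #E / D - y * (1 - θ / 2) * #U ≤
      subsetExpect (θ / D) W (fun S ↦ #(isolatedEdges W E S) +
        x / ⌊nibbleDegree θ k D⌋₊ * #(survivors W E (nibbleDegree θ k D) S) -
        y * #(uncovered W U S)) := by
  have hlinear (c : ℝ) (f g u : Finset (Finset V × ℕ) → ℝ) :
      subsetExpect (θ / D) W (fun S ↦ f S + c * g S - y * u S) =
        subsetExpect (θ / D) W f + c * subsetExpect (θ / D) W g -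
          y * subsetExpect (θ / D) W u := by
    simp only [← smul_eq_mul, ← map_smul, ← map_add, ← map_sub]
    rfl
  rw [hlinear, h.subsetExpect_card_uncovered, mul_assoc y, mul_comm (#U : ℝ)]
  gcongr
  · exact h.le_subsetExpect_add_subsetExpect_survivors hk hD hθ₀ hθ₁ hkθ hκ hx₀ hx₁
  · exact one_sub_div_pow_le_one_sub_half hθ₀.le hθ₁ (by lia)

end IsRegularExtension

namespace IsNibbleable

variable {E : Finset (Finset V × ℕ)} {U : Finset V} {k D κ : ℕ} {θ : ℝ}

lemma exists_nibble (h : IsNibbleable E U k D κ) (hk : 1 ≤ k) (hD : 2 ≤ D) (hθ : 0 < θ)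
    (hkθ : k * θ ≤ 1 / 2) (hκ : κ ≤ θ ^ 6 / (320 * k ^ 3) * D) {x y : ℝ} (hx₀ : 0 ≤ x)
    (hx₁ : x ≤ 1) (hy : 0 ≤ y) :
    ∃ M ⊆ E, ∃ E' ⊆ E, ∃ U' D', IsNibbleable E' U' k D' κ ∧
      (M : Set (Finset V × ℕ)).PairwiseDisjoint Prod.fst ∧ (∀ e ∈ M, Disjoint e.1 U') ∧
      D ≤ 4 * D' ∧
      x * (1 - (k + 1) * θ ^ 2) * #E / D - y * (1 - θ / 2) * #U ≤
        #M + x / D' * #E' - y * #U' := by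
  have hk' : (1 : ℝ) ≤ k := by exact_mod_cast hk
  have hD' : (2 : ℝ) ≤ D := by exact_mod_cast hD
  have hθ₁ : θ ≤ 1 := by nlinarith
  have hR := half_le_nibbleDegree hθ.le hθ₁ hkθ (by lia : 1 ≤ D)
  obtain ⟨W, hW⟩ := h.exists_isRegularExtension
  obtain ⟨S, hS⟩ := exists_le_of_le_subsetExpect (by positivity)
    ((div_lt_one (by positivity)).2 (by linarith))
    (hW.le_subsetExpect_potential hk hD hθ hθ₁ hkθ hκ hx₀ hx₁ hy)
  exact ⟨isolatedEdges W E S, filter_subset _ E, survivors W E (nibbleDegree θ k D) S,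
    filter_subset _ E, uncovered W U S, ⌊nibbleDegree θ k D⌋₊,
    h.mono (filter_subset _ E) (filter_subset _ U)
      (fun e he ↦ subset_uncovered_of_mem_survivors (h.edge_subset e (mem_filter.1 he).1) he)
      (fun v _ ↦ Nat.le_floor (card_edgesAt_survivors_le (by linarith) v)),
    pairwiseDisjoint_isolatedEdges hW.subset,
    fun e he ↦ disjoint_uncovered_of_mem_isolatedEdges hW.subset he,
    le_four_mul_floor_nibbleDegree hθ.le hθ₁ hkθ hD, hS⟩

lemma card_union_of_forall_disjoint (h : IsNibbleable E U k D κ) (hk : 1 ≤ k)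
    {M N : Finset (Finset V × ℕ)} (hM : M ⊆ E) (hMN : ∀ e ∈ M, ∀ f ∈ N, Disjoint e.1 f.1) :
    #(M ∪ N) = #M + #N := by
  refine card_union_of_disjoint (disjoint_left.2 fun e heM heN ↦ ?_)
  have hempty : e.1 = ∅ := disjoint_self.1 (hMN e heM e heN)
  have hcard := h.card_edge e (hM heM)
  rw [hempty, card_empty] at hcard
  lia

lemma exists_matching (h : IsNibbleable E U k D κ) (hk : 1 ≤ k) (hD : 1 ≤ D) (hθ : 0 < θ)
    (hkθ : k * θ ≤ 1 / 2) (T : ℕ) (hκ : 4 ^ T * κ ≤ θ ^ 6 / (320 * k ^ 3) * D) :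
    ∃ M ⊆ E, (M : Set (Finset V × ℕ)).PairwiseDisjoint Prod.fst ∧
      (1 - (k + 1) * θ ^ 2) ^ T * #E / D - (1 - θ / 2) ^ T * #U ≤ #M := by
  have hk' : (1 : ℝ) ≤ k := by exact_mod_cast hk
  have hx₀ : 0 ≤ 1 - (k + 1) * θ ^ 2 := by nlinarith
  have hx₁ : 1 - (k + 1) * θ ^ 2 ≤ 1 := sub_le_self 1 (by positivity)
  have hy : 0 ≤ 1 - θ / 2 := by nlinarith
  induction T generalizing E U D with
  | zero =>
    refine ⟨∅, empty_subset E, by simp, ?_⟩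
    have hcard : (#E : ℝ) ≤ #U * D := by exact_mod_cast h.card_le_card_mul hk
    simpa using div_le_of_le_mul₀ (by positivity) (by positivity) hcard
  | succ T ih =>
    obtain rfl | hD := hD.eq_or_lt
    · refine ⟨E, Subset.rfl, h.pairwiseDisjoint_of_degree_le_one, ?_⟩
      have hE := mul_le_of_le_one_left (Nat.cast_nonneg (#E)) (pow_le_one₀ hx₀ hx₁ (n := T + 1))
      have hU : 0 ≤ (1 - θ / 2) ^ (T + 1) * #U := by positivity
      simp only [Nat.cast_one, div_one]
      linarith
    obtain ⟨M, hME, E', hE', U', D', h', hM, hMU', hDD', hpot⟩ := h.exists_nibble hk hD hθ hkθ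
      ((le_mul_of_one_le_left (Nat.cast_nonneg κ) (one_le_pow₀ (by norm_num))).trans hκ)
      (pow_nonneg hx₀ T) (pow_le_one₀ hx₀ hx₁) (pow_nonneg hy T)
    have hκ' : 4 ^ T * (κ : ℝ) ≤ θ ^ 6 / (320 * k ^ 3) * D' := by
      have hscale : θ ^ 6 / (320 * k ^ 3) * D ≤ θ ^ 6 / (320 * k ^ 3) * (4 * D' : ℕ) := by gcongr
      rw [pow_succ] at hκ
      push_cast at hscale
      linarith
    obtain ⟨N, hNE', hN, hcard⟩ := ih h' (by lia) hκ'
    have hMN : ∀ e ∈ M, ∀ f ∈ N, Disjoint e.1 f.1 := fun e he f hf ↦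
      (hMU' e he).mono_right (h'.edge_subset f (hNE' hf))
    refine ⟨M ∪ N, union_subset hME (hNE'.trans hE'), ?_, ?_⟩
    · rw [coe_union]
      exact hM.union hN fun e he f hf _ ↦ hMN e he f hf
    · rw [mul_div_right_comm] at hcard
      rw [h.card_union_of_forall_disjoint hk hME hMN, Nat.cast_add, pow_succ _ T, pow_succ _ T]
      linarith

end IsNibbleable

lemma exists_nibble_parameters (k : ℕ) {δ : ℝ} (hδ : 0 < δ) :
    ∃ (θ : ℝ) (T : ℕ), 0 < θ ∧ k * θ ≤ 1 / 2 ∧ (1 - θ / 2) ^ T ≤ δ ∧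
      1 - δ ≤ (1 - (k + 1) * θ ^ 2) ^ T := by
  obtain ⟨L, hL⟩ := exists_pow_lt_of_lt_one hδ
    (Real.exp_lt_one_iff.2 (by norm_num : (-(1 / 2) : ℝ) < 0))
  obtain ⟨s, hs⟩ := exists_nat_ge (max (2 * (k + 1) : ℝ) (L * (k + 1) / δ))
  have hsk : 2 * (k + 1 : ℝ) ≤ s := (le_max_left _ _).trans hs
  have hsL : L * (k + 1) ≤ s * δ := (div_le_iff₀ hδ).1 ((le_max_right _ _).trans hs)
  have hs₁ : (1 : ℝ) ≤ s := by linarith [(Nat.cast_nonneg k : (0 : ℝ) ≤ k)]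
  refine ⟨1 / s, s * L, by positivity, ?_, ?_, ?_⟩
  · rw [mul_one_div, div_le_iff₀ (by positivity)]
    linarith
  · calc (1 - 1 / (s : ℝ) / 2) ^ (s * L) = ((1 - 1 / 2 / (s : ℝ)) ^ s) ^ L := by
          rw [div_right_comm, pow_mul]
      _ ≤ Real.exp (-(1 / 2)) ^ L := by
          gcongr
          · exact pow_nonneg (sub_nonneg.2 (div_le_one_of_le₀ (by linarith) (by positivity))) _
          · exact Real.one_sub_div_pow_le_exp_neg (by linarith)
      _ ≤ δ := hL.le
  · have hsmall : (k + 1) * (1 / (s : ℝ)) ^ 2 ≤ 2 := by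
      rw [one_div, inv_pow, ← div_eq_mul_inv, div_le_iff₀ (by positivity)]
      nlinarith
    have hbernoulli := one_add_mul_le_pow (a := -((k + 1) * (1 / (s : ℝ)) ^ 2)) (by linarith)
      (s * L)
    calc 1 - δ ≤ 1 - L * (k + 1) / s := by
          gcongr
          rw [div_le_iff₀ (by positivity)]
          linarith
      _ = 1 + (s * L : ℕ) * -((k + 1) * (1 / (s : ℝ)) ^ 2) := by
          push_cast
          field_simp
          ring
      _ ≤ _ := by rwa [sub_eq_add_neg 1 ((k + 1) * (1 / (s : ℝ)) ^ 2)]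

theorem exists_codegree_ratio_forall_exists_matching (k : ℕ) (hk : 1 ≤ k) {δ : ℝ} (hδ : 0 < δ) :
    ∃ ε : ℝ, 0 < ε ∧ ∀ {V : Type*} [DecidableEq V] {E : Finset (Finset V × ℕ)} {U : Finset V}
      {D κ : ℕ}, IsNibbleable E U k D κ → 1 ≤ D → κ ≤ ε * D →
      ∃ M ⊆ E, (M : Set (Finset V × ℕ)).PairwiseDisjoint Prod.fst ∧ #E / D - δ * #U ≤ #M := by
  obtain ⟨θ, T, hθ, hkθ, hT, hT'⟩ := exists_nibble_parameters k (half_pos hδ)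
  refine ⟨θ ^ 6 / (320 * k ^ 3) / 4 ^ T, by positivity, fun {V _ E U D κ} h hD hκ ↦ ?_⟩
  obtain ⟨M, hME, hM, hcard⟩ := h.exists_matching hk hD hθ hkθ T (by
    rw [div_mul_eq_mul_div, le_div_iff₀ (by positivity)] at hκ
    linarith)
  refine ⟨M, hME, hM, le_trans ?_ hcard⟩
  have hE : (#E : ℝ) / D ≤ #U :=
    div_le_of_le_mul₀ (by positivity) (by positivity) (by exact_mod_cast h.card_le_card_mul hk)
  calc (#E : ℝ) / D - δ * #U = #E / D - δ / 2 * #U - δ / 2 * #U := by ring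
    _ ≤ #E / D - δ / 2 * (#E / D) - (1 - θ / 2) ^ T * #U := by gcongr
    _ = (1 - δ / 2) * (#E / D) - (1 - θ / 2) ^ T * #U := by ring
    _ ≤ (1 - (k + 1) * θ ^ 2) ^ T * (#E / D) - (1 - θ / 2) ^ T * #U := by gcongr
    _ = _ := by rw [mul_div_assoc]

/-! ### Multisets of edges -/

section Multiset

variable {H : Multiset (Finset V)} {U : Finset V} {k D κ : ℕ}

lemma card_filter_toEnumFinset (H : Multiset (Finset V)) (P : Finset V → Prop) [DecidablePred P] :
    #{e ∈ H.toEnumFinset | P e.1} = Multiset.card (H.filter P) := by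
  conv_rhs => rw [← Multiset.map_toEnumFinset_fst H, Multiset.filter_map, Multiset.card_map]
  rfl

lemma isNibbleable_toEnumFinset (hH : ∀ A ∈ H, A ⊆ U ∧ #A = k)
    (hdeg : ∀ v ∈ U, Multiset.card (H.filter fun A ↦ v ∈ A) ≤ D)
    (hcodeg : ∀ u ∈ U, ∀ v ∈ U, u ≠ v → Multiset.card (H.filter fun A ↦ u ∈ A ∧ v ∈ A) ≤ κ) :
    IsNibbleable H.toEnumFinset U k D κ where
  card_edge _ he := (hH _ (Multiset.mem_of_mem_toEnumFinset he)).2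
  edge_subset _ he := (hH _ (Multiset.mem_of_mem_toEnumFinset he)).1
  degree_le v hv := (card_filter_toEnumFinset H fun A ↦ v ∈ A).trans_le (hdeg v hv)
  codegree_le u hu v hv huv := by
    rw [edgesAt, edgesAt, ← filter_and]
    exact (card_filter_toEnumFinset H fun A ↦ u ∈ A ∧ v ∈ A).trans_le (hcodeg u hu v hv huv)

lemma exists_pairwise_disjoint_of_toEnumFinset {M : Finset (Finset V × ℕ)}
    (hM : M ⊆ H.toEnumFinset) (hcard : ∀ e ∈ M, #e.1 = k)
    (hdisj : (M : Set (Finset V × ℕ)).PairwiseDisjoint Prod.fst) :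
    ∃ N ≤ H, N.Pairwise Disjoint ∧ #N.sup = k * #M := by
  refine ⟨M.1.map Prod.fst, Multiset.map_fst_le_of_subset_toEnumFinset hM, ?_, ?_⟩
  · exact ⟨M.toList.map Prod.fst, by rw [← Multiset.map_coe, coe_toList],
      List.pairwise_map.2 (M.nodup_toList.pairwise_of_forall_ne fun e he f hf hef ↦
        hdisj (mem_toList.1 he) (mem_toList.1 hf) hef)⟩
  · have hsup : (M.1.map Prod.fst).sup = M.biUnion Prod.fst := by
      rw [← sup_eq_biUnion, Finset.sup_def]
    rw [hsup, card_biUnion hdisj, sum_const_nat hcard, mul_comm]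

end Multiset

theorem nibble_matching_theorem_general (k : ℕ) (hk : 1 ≤ k) (δ : ℝ) (hδ : 0 < δ) :
    ∃ ε : ℝ, 0 < ε ∧ ∀ {V : Type*} [DecidableEq V] (U : Finset V) (H : Multiset (Finset V)),
      (∀ A ∈ H, A ⊆ U ∧ #A = k) →
      ∀ D : ℕ, 0 < D → (∀ v ∈ U, Multiset.card (H.filter fun A ↦ v ∈ A) ≤ D) →
      (∀ u ∈ U, ∀ v ∈ U, u ≠ v →
        (Multiset.card (H.filter fun A ↦ u ∈ A ∧ v ∈ A) : ℝ) ≤ ε * D) →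
      ∃ M ≤ H, M.Pairwise Disjoint ∧
        (k * Multiset.card H / #U / D - δ) * #U ≤ (#M.sup : ℝ) := by
  obtain ⟨ε, hε, hmatching⟩ := exists_codegree_ratio_forall_exists_matching k hk
    (by positivity : 0 < δ / k)
  refine ⟨ε, hε, fun U H hH D hD hdeg hcodeg ↦ ?_⟩
  have hE := isNibbleable_toEnumFinset hH hdeg (κ := ⌊ε * D⌋₊)
    fun u hu v hv huv ↦ Nat.le_floor (hcodeg u hu v hv huv)
  obtain ⟨M, hME, hM, hcard⟩ := hmatching hE hD (Nat.floor_le (by positivity))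
  obtain ⟨N, hNH, hN, hNM⟩ :=
    exists_pairwise_disjoint_of_toEnumFinset hME (fun e he ↦ hE.card_edge e (hME he)) hM
  refine ⟨N, hNH, hN, ?_⟩
  rw [Multiset.card_toEnumFinset] at hcard
  rw [hNM, Nat.cast_mul]
  calc (k * Multiset.card H / #U / D - δ) * (#U : ℝ)
      = k * (Multiset.card H / D) * #U / #U - δ * #U := by ring
    _ ≤ k * (Multiset.card H / D) - δ * #U := by
        gcongr
        exact div_le_of_le_mul₀ (by positivity) (by positivity) le_rfl
    _ = k * (Multiset.card H / D - δ / k * #U) := by field_simp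
    _ ≤ k * #M := by gcongr

theorem nibble_matching_theorem (k : ℕ) (hk : 1 ≤ k) (δ : ℝ) (hδ : 0 < δ) :
    ∃ n₀ : ℕ, ∃ ε : ℝ, 0 < ε ∧
      ∀ n : ℕ, n₀ ≤ n →
      ∀ H : Multiset (Finset ℕ),
        (∀ A ∈ H, A ⊆ Finset.range n ∧ A.card = k) →
        0 < ((Finset.range n).sup fun v => Multiset.card (H.filter fun A => v ∈ A)) →
        ∀ c : ℝ, 0 < c →
        ((k : ℝ) * (Multiset.card H : ℝ) / (n : ℝ)) /
            ((((Finset.range n).sup fun v =>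
              Multiset.card (H.filter fun A => v ∈ A) : ℕ)) : ℝ) = c →
        (∀ u ∈ Finset.range n, ∀ v ∈ Finset.range n, u ≠ v →
          (Multiset.card (H.filter fun A => u ∈ A ∧ v ∈ A) : ℝ) ≤
            ε * ((((Finset.range n).sup fun w =>
              Multiset.card (H.filter fun A => w ∈ A) : ℕ)) : ℝ)) →
        ∃ M : Multiset (Finset ℕ), M ≤ H ∧
          M.Pairwise (fun A B => Disjoint A B) ∧
          (c - δ) * (n : ℝ) ≤ ((M.sup).card : ℝ) := by
  obtain ⟨ε, hε, h⟩ := nibble_matching_theorem_general k hk δ hδ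
  refine ⟨0, ε, hε, fun n _ H hH hD c _ hc hcod ↦ ?_⟩
  simpa only [← hc, card_range] using h (range n) H hH _ hD (fun v hv ↦ le_sup
    (f := fun v ↦ Multiset.card (H.filter fun A ↦ v ∈ A)) hv) hcod
end

section
/- Let a, b be positive reals and k₁, k₂ nonnegative integers with k₁ < a and k₂ < b. Then (∏_{i=1}^{k₁}(a−i))·(∏_{i=1}^{k₂}(b−i)) / ∏_{i=1}^{k₁+k₂}(a+b−i) ≤ a^{k₁}·b^{k₂} / (a+b)^{k₁+k₂}. -/
open Finset

/-!
After division by `a ^ k₁`, `b ^ k₂` and `(a + b) ^ (k₁ + k₂)`, the claim says that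
`P c k = ∏ i ∈ Icc 1 k, (1 - i / c)` satisfies `P a k₁ * P b k₂ ≤ P (a + b) (k₁ + k₂)`.
Remove the factors on the left in order of decreasing `i / c`. The mediant
`(k₁ + k₂) / (a + b)` is at most the larger of `k₁ / a` and `k₂ / b`, so the smaller of the last
factors on the left is at most the last factor on the right.
-/

section Field

variable {K : Type*} [Field K]

/-- The falling factorial `(c - 1) ⋯ (c - k)` divided by `c ^ k`, as the product of the
factors `1 - i / c`. It absorbs the powers in the inequality. For `c = 0` the junk value of the
quotients makes it `1`. -/
def normalizedFallingFactorial (c : K) (k : ℕ) : K :=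
  ∏ i ∈ Icc 1 k, (1 - (i : K) / c)

lemma normalizedFallingFactorial_zero (c : K) : normalizedFallingFactorial c 0 = 1 := rfl

lemma normalizedFallingFactorial_succ (c : K) (k : ℕ) :
    normalizedFallingFactorial c (k + 1) =
      normalizedFallingFactorial c k * (1 - ((k + 1 : ℕ) : K) / c) :=
  prod_Icc_succ_top (Nat.le_add_left 1 k) _

lemma prod_Icc_sub_natCast {c : K} (hc : c ≠ 0) (k : ℕ) :
    ∏ i ∈ Icc 1 k, (c - (i : K)) = c ^ k * normalizedFallingFactorial c k := by
  calc
    ∏ i ∈ Icc 1 k, (c - (i : K)) = ∏ i ∈ Icc 1 k, c * (1 - (i : K) / c) :=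
      prod_congr rfl fun i _ => by rw [mul_one_sub, mul_div_cancel₀ _ hc]
    _ = c ^ k * normalizedFallingFactorial c k := by
      rw [prod_mul_distrib, prod_const, Nat.card_Icc, Nat.add_sub_cancel,
        normalizedFallingFactorial]

end Field

section LinearOrderedField

variable {K : Type*} [Field K] [LinearOrder K] [IsStrictOrderedRing K]

lemma add_div_add_le_of_div_le_div {x y a b : K} (ha : 0 < a) (hb : 0 < b)
    (h : y / b ≤ x / a) : (x + y) / (a + b) ≤ x / a := by
  rw [div_le_div_iff₀ hb ha] at h
  rw [div_le_div_iff₀ (add_pos ha hb) ha]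
  linarith

lemma one_sub_natCast_div_nonneg {c : K} {i : ℕ} (h : (i : K) ≤ c) : 0 ≤ 1 - (i : K) / c :=
  sub_nonneg.mpr (div_le_one_of_le₀ h (i.cast_nonneg.trans h))

lemma normalizedFallingFactorial_nonneg {c : K} {k : ℕ} (h : (k : K) ≤ c) :
    0 ≤ normalizedFallingFactorial c k :=
  prod_nonneg fun _ hi =>
    one_sub_natCast_div_nonneg ((Nat.cast_le.mpr (mem_Icc.mp hi).2).trans h)

lemma normalizedFallingFactorial_pos {c : K} {k : ℕ} (h : (k : K) < c) :
    0 < normalizedFallingFactorial c k := by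
  have hc : 0 < c := k.cast_nonneg.trans_lt h
  refine prod_pos fun i hi => sub_pos.mpr ((div_lt_one hc).mpr ?_)
  exact (Nat.cast_le.mpr (mem_Icc.mp hi).2).trans_lt h

lemma normalizedFallingFactorial_succ_mul_le {a b : K} {k₁ k₂ : ℕ} (ha : 0 < a) (hb : 0 < b)
    (hk₁ : ((k₁ + 1 : ℕ) : K) ≤ a) (hk₂ : (k₂ : K) ≤ b)
    (hratio : (k₂ : K) / b ≤ ((k₁ + 1 : ℕ) : K) / a)
    (h : normalizedFallingFactorial a k₁ * normalizedFallingFactorial b k₂ ≤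
      normalizedFallingFactorial (a + b) (k₁ + k₂)) :
    normalizedFallingFactorial a (k₁ + 1) * normalizedFallingFactorial b k₂ ≤
      normalizedFallingFactorial (a + b) (k₁ + k₂ + 1) := by
  have hlast : 1 - ((k₁ + 1 : ℕ) : K) / a ≤ 1 - ((k₁ + k₂ + 1 : ℕ) : K) / (a + b) := by
    rw [add_right_comm, Nat.cast_add (k₁ + 1) k₂]
    exact sub_le_sub_left (add_div_add_le_of_div_le_div ha hb hratio) 1
  have htotal : ((k₁ + k₂ : ℕ) : K) ≤ a + b := by
    push_cast at hk₁ ⊢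
    linarith
  rw [normalizedFallingFactorial_succ, normalizedFallingFactorial_succ, mul_right_comm]
  exact mul_le_mul h hlast (one_sub_natCast_div_nonneg hk₁)
    (normalizedFallingFactorial_nonneg htotal)

theorem normalizedFallingFactorial_mul_le_add {a b : K} {k₁ k₂ : ℕ} (ha : 0 < a) (hb : 0 < b)
    (hk₁ : (k₁ : K) ≤ a) (hk₂ : (k₂ : K) ≤ b) :
    normalizedFallingFactorial a k₁ * normalizedFallingFactorial b k₂ ≤
      normalizedFallingFactorial (a + b) (k₁ + k₂) := by
  induction hn : k₁ + k₂ generalizing a b k₁ k₂ with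
  | zero =>
    obtain ⟨rfl, rfl⟩ := Nat.add_eq_zero_iff.mp hn
    simp only [normalizedFallingFactorial_zero, mul_one, le_refl]
  | succ n ih =>
    wlog hratio : (k₂ : K) / b ≤ (k₁ : K) / a generalizing a b k₁ k₂
    · rw [mul_comm, add_comm a b]
      exact this hb ha hk₂ hk₁ (by rwa [add_comm]) (le_of_not_ge hratio)
    cases k₁ with
    | zero =>
      rw [Nat.cast_zero, zero_div, div_le_iff₀ hb, zero_mul, Nat.cast_nonpos] at hratio
      omega
    | succ m =>
      obtain rfl : n = m + k₂ := by omega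
      have hm : (m : K) ≤ a := (Nat.cast_le.mpr m.le_succ).trans hk₁
      exact normalizedFallingFactorial_succ_mul_le ha hb hk₁ hk₂ hratio (ih ha hb hm hk₂ rfl)

theorem falling_factorial_product_inequality_general {a b : K} {k₁ k₂ : ℕ}
    (hk₁ : (k₁ : K) < a) (hk₂ : (k₂ : K) < b) :
    (∏ i ∈ Icc 1 k₁, (a - (i : K))) * (∏ i ∈ Icc 1 k₂, (b - (i : K))) /
        ∏ i ∈ Icc 1 (k₁ + k₂), (a + b - (i : K)) ≤
      a ^ k₁ * b ^ k₂ / (a + b) ^ (k₁ + k₂) := by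
  have ha : 0 < a := k₁.cast_nonneg.trans_lt hk₁
  have hb : 0 < b := k₂.cast_nonneg.trans_lt hk₂
  have hpos : 0 < normalizedFallingFactorial (a + b) (k₁ + k₂) :=
    normalizedFallingFactorial_pos (by simpa only [Nat.cast_add] using add_lt_add hk₁ hk₂)
  rw [prod_Icc_sub_natCast ha.ne', prod_Icc_sub_natCast hb.ne',
    prod_Icc_sub_natCast (add_pos ha hb).ne', mul_mul_mul_comm, mul_div_mul_comm]
  refine mul_le_of_le_one_right (by positivity) ((div_le_one hpos).mpr ?_)
  exact normalizedFallingFactorial_mul_le_add ha hb hk₁.le hk₂.le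

end LinearOrderedField

theorem falling_factorial_product_inequality (a b : ℝ) (ha : 0 < a) (hb : 0 < b)
    (k₁ k₂ : ℕ) (hk₁ : (k₁ : ℝ) < a) (hk₂ : (k₂ : ℝ) < b) :
    (∏ i ∈ Finset.Icc 1 k₁, (a - (i : ℝ))) * (∏ i ∈ Finset.Icc 1 k₂, (b - (i : ℝ))) /
        ∏ i ∈ Finset.Icc 1 (k₁ + k₂), (a + b - (i : ℝ)) ≤
      a ^ k₁ * b ^ k₂ / (a + b) ^ (k₁ + k₂) :=
  falling_factorial_product_inequality_general hk₁ hk₂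
end
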